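/- For simple random walk on Z^2 with anticlockwise rotors, hitting probability h = h_{b,c}, and the spiral initial rotor configuration r((x,y)) = floor(1/2 + (2/pi) arg(x - 1/2, y - 1/2)) mod 4, the rotor walk started at a (with b,c made into sinks returning to a) satisfies |h(a) - n_t(b)/n| <= C (ln n)/n where n = n_t(b)+n_t(c), and moreover t <= C' n^3, for constants C, C' depending on a,b,c. -/

import Mathlib

open scoped BigOperators Classical

/-- `(x, r)` is a rotor walk for the rotor mechanism `(d, succ)`.  Rotor values are
`0`-based: rotor value `j` at `u` means the rotor points to `succ u j`
(corresponding to `u^(j+1)` in `1`-based notation).  At each step the rotor at the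
current particle position is incremented cyclically and the particle moves in the
new rotor direction. -/
def IsRotorWalk {V : Type*} (d : V → ℕ) (succ : V → ℕ → V)
    (x : ℕ → V) (r : ℕ → V → ℕ) : Prop :=
  (∀ v, r 0 v < d v) ∧
  (∀ t, r (t + 1) (x t) = (r t (x t) + 1) % d (x t)) ∧
  (∀ t v, v ≠ x t → r (t + 1) v = r t v) ∧
  (∀ t, x (t + 1) = succ (x t) (r (t + 1) (x t)))

/-- the number of visits of the walk `x` to `v` strictly before time `t` -/
noncomputable def nvisits {V : Type*} (x : ℕ → V) (t : ℕ) (v : V) : ℕ :=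
  ((Finset.range t).filter fun s => x s = v).card

/-- the rotor mechanism `(d, succ)` realizes the transition kernel `p`:
`p u v` is the proportion of the `d u` successors of `u` equal to `v` -/
def Realizes {V : Type*} (d : V → ℕ) (succ : V → ℕ → V) (p : V → V → ℝ) : Prop :=
  (∀ u, 0 < d u) ∧
  ∀ u v, p u v = ((Finset.range (d u)).filter fun i => succ u i = v).card / d u

/-- `hitAux p b c t v` is the probability, for the Markov chain with kernel `p`
started at `v`, of hitting `b` before hitting `c` and within `t` steps. -/
noncomputable def hitAux {V : Type*} (p : V → V → ℝ) (b c : V) : ℕ → V → ℝ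
  | 0, v => if v = b then 1 else 0
  | t + 1, v => if v = b then 1 else if v = c then 0 else ∑' w, p v w * hitAux p b c t w

/-- the hitting probability `h_{b,c}(v) = P_v(T_b < T_c)`, as the monotone limit of the
probabilities of hitting `b` before `c` within `t` steps.  (Taking `b = c` gives the
single-target hitting probability `P_v(T_b < ∞)`.) -/
noncomputable def hitProb {V : Type*} (p : V → V → ℝ) (b c : V) (v : V) : ℝ :=
  ⨆ t, hitAux p b c t v

/-- the escape probability `e_{u,v} = P_u(T_v < T_u^+)`: a first step from `u` to `w`,
then hit `v` before `u`. -/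
noncomputable def escProb {V : Type*} (p : V → V → ℝ) (u v : V) : ℝ :=
  ∑' w, p u w * hitProb p v u w

/-- the kernel of simple symmetric random walk on ℤ² -/
noncomputable def pZ2 : ℤ × ℤ → ℤ × ℤ → ℝ := fun u v =>
  if |u.1 - v.1| + |u.2 - v.2| = 1 then 1 / 4 else 0

/-- the anticlockwise rotor mechanism on ℤ²: in `0`-based indexing, rotor value `j`
points to `u^(j+1) = u + (cos ((j+1)π/2), sin ((j+1)π/2))`, i.e.
`j = 0` → North, `1` → West, `2` → South, `3` → East. -/
def succZ2 (u : ℤ × ℤ) (i : ℕ) : ℤ × ℤ :=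
  match i % 4 with
  | 0 => (u.1, u.2 + 1)
  | 1 => (u.1 - 1, u.2)
  | 2 => (u.1, u.2 - 1)
  | _ => (u.1 + 1, u.2)

/-- `arg` with values in `[0, 2π)` -/
noncomputable def arg2 (z : ℂ) : ℝ :=
  if Complex.arg z < 0 then Complex.arg z + 2 * Real.pi else Complex.arg z

/-- the spiral initial rotor configuration
`r((x,y)) = ⌊1/2 + (2/π) arg(x - 1/2, y - 1/2)⌋ mod 4`, translated to the `0`-based
indexing of `succZ2` (the paper's value `m ∈ {0,1,2,3}` denotes the rotor pointing to
`u^(m)` with `0 ≡ 4`, i.e. the `0`-based value `(m+3) % 4`). -/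
noncomputable def spiralRotor (v : ℤ × ℤ) : ℕ :=
  ((⌊(1 : ℝ) / 2 + (2 / Real.pi) * arg2 ⟨(v.1 : ℝ) - 1 / 2, (v.2 : ℝ) - 1 / 2⟩⌋).toNat
    + 3) % 4

/-- degrees for the walk modified so that `b` and `c` are sent straight back to `a` -/
def dMod (b c : ℤ × ℤ) : ℤ × ℤ → ℕ := fun u => if u = b ∨ u = c then 1 else 4

/-- successors for the modified walk: `b` and `c` send the particle straight to `a` -/
def succMod (a b c : ℤ × ℤ) : ℤ × ℤ → ℕ → ℤ × ℤ := fun u i =>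
  if u = b ∨ u = c then a else succZ2 u i

/-- the spiral initial configuration, modified at the degree-one vertices `b, c` -/
noncomputable def rotInit (b c : ℤ × ℤ) : ℤ × ℤ → ℕ := fun v =>
  if v = b ∨ v = c then 0 else spiralRotor v

/-!
Summing the increments of `h` along the walk telescopes. The sinks `b` and `c` contribute
`n_t(b) - n h(a)` up to sign; at any other vertex the rotor serves the directions in cyclic order
and `h` is harmonic, so that full turns cancel and at most the variation of `h` there remains.
Hence `|n h(a) - n_t(b)|` is at most one plus the total variation of `h` over the visited vertices.

By recurrence, `h` is an affine function of the bounded dipole potential with a source at `b` and a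
sink at `c`. In the Fourier representation of the potential kernel the gradient of this dipole
decays like the inverse square of the distance, and summing over concentric square rings turns this
into the logarithm of the radius of the visited region.

The spiral configuration keeps that radius small: an excursion from `a` uses each rotor edge at most
once, and beyond the rings of `a`, `b` and `c` it can therefore advance by at most one new ring. As
the number of excursions is `O(n)`, so are the radius and the number of visits to any vertex, whence
`t = O(n² n)`.
-/

section Visits

variable {V : Type*} (x : ℕ → V)

theorem nvisits_succ (t : ℕ) (v : V) :
    nvisits x (t + 1) v = nvisits x t v + if x t = v then 1 else 0 := by
  simp only [nvisits, Finset.range_add_one, Finset.filter_insert]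
  split_ifs <;> simp

theorem nvisits_succ_self (t : ℕ) : nvisits x (t + 1) (x t) = nvisits x t (x t) + 1 := by
  simp [nvisits_succ]

theorem nvisits_mono (v : V) : Monotone fun t => nvisits x t v :=
  monotone_nat_of_le_succ fun t => by simp [nvisits_succ]

theorem nvisits_succ_le (t : ℕ) (v : V) : nvisits x (t + 1) v ≤ nvisits x t v + 1 := by
  rw [nvisits_succ]
  split_ifs <;> omega

theorem nvisits_eq_of_forall_ne {s t : ℕ} (hst : s ≤ t) {v : V}
    (h : ∀ u, s ≤ u → u < t → x u ≠ v) : nvisits x t v = nvisits x s v := by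
  induction t, hst using Nat.le_induction with
  | base => rfl
  | succ t hst ih =>
    rw [nvisits_succ, if_neg (h t hst t.lt_succ_self), add_zero,
      ih fun u hsu hut => h u hsu (hut.trans t.lt_succ_self)]

theorem nvisits_succ_eq_add_card_arrivals {s t : ℕ} (hst : s ≤ t) (v : V) :
    nvisits x (t + 1) v =
      nvisits x (s + 1) v + ((Finset.Ico s t).filter fun u => x (u + 1) = v).card := by
  induction t, hst using Nat.le_induction with
  | base => simp
  | succ t hst ih =>
    rw [nvisits_succ, ih, Nat.Ico_succ_right_eq_insert_Ico hst, Finset.filter_insert]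
    split_ifs <;> simp [add_assoc]

theorem sum_nvisits {B : Finset V} {t : ℕ} (hB : ∀ s < t, x s ∈ B) :
    ∑ v ∈ B, nvisits x t v = t := by
  simpa [nvisits] using
    (Finset.card_eq_sum_card_fiberwise (s := Finset.range t) (t := B) (f := x)
      (fun s hs => hB s (by simpa using hs))).symm

/-- The time interval `[s, t)` is an initial piece of an excursion of `x` from `a`: the walk is
at `a` at time `s` and does not return before time `t`. -/
def IsExcursion (a : V) (s t : ℕ) : Prop :=
  s < t ∧ x s = a ∧ ∀ u, s < u → u < t → x u ≠ a

variable {x}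

theorem IsExcursion.mono {a : V} {s t t' : ℕ} (h : IsExcursion x a s t') (hst : s < t)
    (ht : t ≤ t') : IsExcursion x a s t :=
  ⟨hst, h.2.1, fun u hsu hut => h.2.2 u hsu (hut.trans_le ht)⟩

theorem IsExcursion.nvisits_start {a : V} {s t : ℕ} (h : IsExcursion x a s t) :
    nvisits x t a = nvisits x s a + 1 := by
  obtain ⟨hst, rfl, hne⟩ := h
  rw [nvisits_eq_of_forall_ne x hst hne, nvisits_succ_self]

theorem exists_isExcursion {t : ℕ} (ht : 0 < t) : ∃ s, IsExcursion x (x 0) s t := by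
  induction t, ht using Nat.le_induction with
  | base => exact ⟨0, by simp, rfl, by omega⟩
  | succ t ht ih =>
    by_cases hx : x t = x 0
    · exact ⟨t, by omega, hx, by omega⟩
    · obtain ⟨s, hst, hs, hne⟩ := ih
      refine ⟨s, by omega, hs, fun u hsu hut => ?_⟩
      obtain hut | rfl := (Nat.lt_succ_iff.1 hut).lt_or_eq
      exacts [hne u hsu hut, hx]

end Visits

section PeriodicSum

variable {d : ℕ}

theorem Ico_sum_mod_eq_zero {g : ℕ → ℝ} (hg : ∑ i ∈ Finset.range d, g i = 0) (k : ℕ) :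
    ∑ j ∈ Finset.Ico k (k + d), g (j % d) = 0 := by
  rw [← hg, ← Nat.image_Ico_mod k d, Finset.sum_image (Nat.mod_injOn_Ico k d)]

theorem abs_sum_Ico_mod_le (hd : 0 < d) {g : ℕ → ℝ} (hg : ∑ i ∈ Finset.range d, g i = 0)
    (k n : ℕ) :
    |∑ j ∈ Finset.Ico k (k + n), g (j % d)| ≤ ∑ i ∈ Finset.range d, |g i| := by
  induction n using Nat.strong_induction_on generalizing k with
  | _ n ih =>
    obtain hn | hn := lt_or_ge n d
    · have hinj : Set.InjOn (· % d) (Finset.Ico k (k + n) : Set ℕ) :=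
        (Nat.mod_injOn_Ico k d).mono fun j hj => by
          simp only [Finset.coe_Ico, Set.mem_Ico] at hj ⊢
          omega
      calc |∑ j ∈ Finset.Ico k (k + n), g (j % d)|
          ≤ ∑ j ∈ Finset.Ico k (k + n), |g (j % d)| := Finset.abs_sum_le_sum_abs _ _
        _ = ∑ i ∈ (Finset.Ico k (k + n)).image (· % d), |g i| :=
          (Finset.sum_image (f := fun i => |g i|) hinj).symm
        _ ≤ ∑ i ∈ Finset.range d, |g i| := by
          refine Finset.sum_le_sum_of_subset_of_nonneg (fun i hi => ?_) fun i _ _ => abs_nonneg _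
          obtain ⟨j, -, rfl⟩ := Finset.mem_image.1 hi
          exact Finset.mem_range.2 (Nat.mod_lt j hd)
    · rw [← Finset.sum_Ico_consecutive _ (k.le_add_right d) (by omega), Ico_sum_mod_eq_zero hg,
        zero_add, show k + n = k + d + (n - d) by omega]
      exact ih (n - d) (by omega) (k + d)

end PeriodicSum

section Mechanism

variable {V : Type*} (d : V → ℕ) (succ : V → ℕ → V)

/-- The rotor edges leading into `v`, as pairs of a vertex and a rotor value at that vertex. -/
def inEdges (v : V) : Set (V × ℕ) := {e | e.2 < d e.1 ∧ succ e.1 e.2 = v}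

/-- The graph relation of a rotor mechanism: some rotor value at `u` points to `w`. -/
def RotorStep (u w : V) : Prop := ∃ i < d u, succ u i = w

/-- The Laplacian `∑ᵢ (f (uⁱ) - f u)` of a rotor mechanism, not divided by the degree. -/
def rotorLaplacian (f : V → ℝ) (u : V) : ℝ :=
  ∑ i ∈ Finset.range (d u), (f (succ u i) - f u)

/-- The total variation `∑ᵢ |f (uⁱ) - f u|` of `f` along the rotor edges leaving `u`. -/
def rotorVariation (f : V → ℝ) (u : V) : ℝ :=
  ∑ i ∈ Finset.range (d u), |f (succ u i) - f u|

end Mechanism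

namespace IsRotorWalk

variable {V : Type*} {d : V → ℕ} {succ : V → ℕ → V} {x : ℕ → V} {r : ℕ → V → ℕ}

section Rotor

variable (hw : IsRotorWalk d succ x r)
include hw

theorem degree_pos (v : V) : 0 < d v := (Nat.zero_le _).trans_lt (hw.1 v)

theorem rotor_eq (t : ℕ) (v : V) : r t v = (r 0 v + nvisits x t v) % d v := by
  induction t with
  | zero => simp [nvisits, Nat.mod_eq_of_lt (hw.1 v)]
  | succ t ih =>
    by_cases hv : v = x t
    · subst hv
      rw [hw.2.1, ih, Nat.mod_add_mod, nvisits_succ_self, add_assoc]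
    · rw [hw.2.2.1 t v hv, ih, nvisits_succ, if_neg (Ne.symm hv), add_zero]

theorem rotor_lt (t : ℕ) (v : V) : r t v < d v := by
  rw [hw.rotor_eq]
  exact Nat.mod_lt _ (hw.degree_pos v)

theorem sum_visits_eq {M : Type*} [AddCommMonoid M] (f : ℕ → M) (t : ℕ) (v : V) :
    ∑ s ∈ Finset.range t with x s = v, f (r (s + 1) v) =
      ∑ j ∈ Finset.Ico (r 0 v + 1) (r 0 v + 1 + nvisits x t v), f (j % d v) := by
  induction t with
  | zero => simp [nvisits]
  | succ t ih =>
    rw [Finset.range_add_one, Finset.filter_insert, nvisits_succ]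
    split_ifs with hv
    · rw [Finset.sum_insert (by simp), ih, ← add_assoc, Finset.sum_Ico_succ_top (by omega),
        add_comm, hw.rotor_eq (t + 1), nvisits_succ, if_pos hv, add_right_comm, ← add_assoc]
    · rw [ih, add_zero]

theorem abs_sum_visits_le {g : ℕ → ℝ} {v : V} (hg : ∑ i ∈ Finset.range (d v), g i = 0) (t : ℕ) :
    |∑ s ∈ Finset.range t with x s = v, g (r (s + 1) v)| ≤
      ∑ i ∈ Finset.range (d v), |g i| := by
  rw [hw.sum_visits_eq]
  exact abs_sum_Ico_mod_le (hw.degree_pos v) hg _ _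

end Rotor

section Reachability

theorem nvisits_le_nvisits_succ (hw : IsRotorWalk d succ x r) (t : ℕ) {v : V} {i : ℕ}
    (hi : i < d v) : nvisits x t v ≤ d v * (nvisits x t (succ v i) + 3) := by
  set exits := (Finset.range t).filter fun s => x s = v ∧ r (s + 1) v = i with hexits
  have hdv : (0 : ℝ) < d v := by exact_mod_cast hw.degree_pos v
  have hcard : exits.card ≤ nvisits x t (succ v i) + 1 := by
    calc exits.card
        ≤ ((Finset.Ico 0 t).filter fun s => x (s + 1) = succ v i).card :=
          Finset.card_le_card fun s hs => by
            simp only [hexits, Finset.mem_filter, Finset.mem_range] at hs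
            obtain ⟨hst, hxs, hrs⟩ := hs
            simp [hst, hw.2.2.2, hxs, hrs]
      _ ≤ nvisits x (t + 1) (succ v i) := by
          rw [nvisits_succ_eq_add_card_arrivals x t.zero_le]
          omega
      _ ≤ nvisits x t (succ v i) + 1 := nvisits_succ_le x t _
  have hdisc : |(exits.card : ℝ) - nvisits x t v / d v| ≤ 2 := by
    set g : ℕ → ℝ := fun j => (if j = i then 1 else 0) - 1 / d v with hg
    have hsum : ∑ j ∈ Finset.range (d v), g j = 0 := by
      simp [hg, Finset.sum_sub_distrib, hi, hdv.ne']
    calc |(exits.card : ℝ) - nvisits x t v / d v|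
        = |∑ s ∈ Finset.range t with x s = v, g (r (s + 1) v)| := by
          simp [hg, hexits, nvisits, Finset.sum_sub_distrib, Finset.filter_filter, div_eq_mul_inv]
      _ ≤ ∑ j ∈ Finset.range (d v), |g j| := hw.abs_sum_visits_le hsum t
      _ ≤ ∑ j ∈ Finset.range (d v), ((if j = i then 1 else 0) + 1 / d v : ℝ) :=
          Finset.sum_le_sum fun j _ => (abs_sub _ _).trans_eq <| by
            rw [abs_of_nonneg (by split_ifs <;> norm_num), abs_of_pos (by positivity)]
      _ = 2 := by
          rw [Finset.sum_add_distrib, Finset.sum_const, Finset.card_range, nsmul_eq_mul,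
            mul_one_div_cancel hdv.ne', Finset.sum_ite_eq', if_pos (Finset.mem_range.2 hi)]
          norm_num
  have hreal : (nvisits x t v : ℝ) ≤ d v * (nvisits x t (succ v i) + 3) := by
    have hcard' : (exits.card : ℝ) ≤ nvisits x t (succ v i) + 1 := by exact_mod_cast hcard
    rw [← div_le_iff₀' hdv]
    linarith [(abs_le.1 hdisc).1]
  exact_mod_cast hreal

theorem exists_nvisits_le_of_reachable {v w : V}
    (h : Relation.ReflTransGen (RotorStep d succ) v w) :
    ∃ C : ℕ, ∀ (x : ℕ → V) (r : ℕ → V → ℕ), IsRotorWalk d succ x r →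
      ∀ t, nvisits x t v ≤ C * (nvisits x t w + 1) := by
  induction h using Relation.ReflTransGen.head_induction_on with
  | refl => exact ⟨1, fun x r _ t => by omega⟩
  | @head v u hstep _ ih =>
    obtain ⟨i, hi, rfl⟩ := hstep
    obtain ⟨C, hC⟩ := ih
    refine ⟨d v * (C + 3), fun x r hw t => ?_⟩
    calc nvisits x t v ≤ d v * (nvisits x t (succ v i) + 3) := hw.nvisits_le_nvisits_succ t hi
      _ ≤ d v * (C * (nvisits x t w + 1) + 3 * (nvisits x t w + 1)) := by
        gcongr
        · exact hC x r hw t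
        · omega
      _ = d v * (C + 3) * (nvisits x t w + 1) := by ring

end Reachability

section Confinement

variable (hw : IsRotorWalk d succ x r)
include hw

theorem injOn_edge {s t : ℕ} (h : ∀ v, nvisits x t v ≤ nvisits x s v + d v) :
    Set.InjOn (fun u => (x u, r (u + 1) (x u))) (Set.Ico s t) := by
  have hlt : ∀ u ∈ Set.Ico s t, ∀ u' ∈ Set.Ico s t, u < u' → x u = x u' →
      r (u + 1) (x u) ≠ r (u' + 1) (x u') := by
    intro u hu u' hu' huu' hx hr
    have hstart := nvisits_mono x (x u) hu.1
    have hstep := nvisits_succ_self x u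
    have hbetween := nvisits_mono x (x u) (Nat.succ_le_of_lt huu')
    have hstep' := nvisits_succ_self x u'
    have hend := nvisits_mono x (x u) (Nat.succ_le_of_lt hu'.2)
    have hbound := h (x u)
    simp only [← hx, Nat.succ_eq_add_one] at hstart hbetween hstep' hend hr
    rw [hw.rotor_eq (u + 1), hw.rotor_eq (u' + 1)] at hr
    have hsame : r 0 (x u) + nvisits x (u + 1) (x u) = r 0 (x u) + nvisits x (u' + 1) (x u) :=
      Nat.mod_injOn_Ico (r 0 (x u) + nvisits x s (x u) + 1) (d (x u))
        (by simp only [Finset.coe_Ico, Set.mem_Ico]; omega)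
        (by simp only [Finset.coe_Ico, Set.mem_Ico]; omega) hr
    omega
  intro u hu u' hu' heq
  obtain ⟨hx, hr⟩ := Prod.ext_iff.1 heq
  obtain h | h | h := lt_trichotomy u u'
  · exact (hlt u hu u' hu' h hx hr).elim
  · exact h
  · exact (hlt u' hu' u hu h hx.symm hr.symm).elim

/-- Visits to `v ≠ a` during an excursion from `a` are arrivals through distinct edges. -/
theorem nvisits_le_add_encard_inEdges {a v : V} {s t : ℕ} (hst : s ≤ t) (hs : x s = a) (hv : v ≠ a)
    {P : V → Prop} (hP : ∀ u ∈ Set.Ico s t, P (x u))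
    (h : ∀ v, nvisits x t v ≤ nvisits x s v + d v) :
    (nvisits x (t + 1) v : ℕ∞) ≤
      nvisits x s v + {e ∈ inEdges d succ v | P e.1}.encard := by
  set arrivals := (Finset.Ico s t).filter fun u => x (u + 1) = v with harr
  have hcard : (arrivals : Set ℕ).encard ≤ {e ∈ inEdges d succ v | P e.1}.encard := by
    refine Set.encard_le_encard_of_injOn (f := fun u => (x u, r (u + 1) (x u))) (fun u hu => ?_)
      ((hw.injOn_edge h).mono fun u hu => ?_)
    · simp only [harr, Finset.coe_filter, Finset.mem_Ico, Set.mem_ofPred_eq] at hu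
      exact ⟨⟨hw.rotor_lt _ _, (hw.2.2.2 u).symm.trans hu.2⟩, hP u hu.1⟩
    · simpa using (Finset.mem_filter.1 hu).1
  rw [nvisits_succ_eq_add_card_arrivals x hst, nvisits_succ, hs, if_neg hv.symm]
  rw [Set.encard_coe_eq_coe_finsetCard] at hcard
  simpa using add_le_add_right hcard (nvisits x s v : ℕ∞)

variable {a : V} (hin : ∀ v ≠ a, (inEdges d succ v).encard ≤ d v ∨ ∀ i, succ v i = a)
include hin

theorem nvisits_le_of_isExcursion {s t : ℕ} (h : IsExcursion x a s t) (v : V) :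
    nvisits x t v ≤ nvisits x s v + d v := by
  have hd := hw.degree_pos
  have hst : s + 1 ≤ t := h.1
  induction t, hst using Nat.le_induction generalizing v with
  | base =>
    have := hd v
    have := nvisits_succ_le x s v
    omega
  | succ t hst ih =>
    have ih := ih (h.mono hst t.le_succ)
    by_cases hva : v = a
    · have := hd v
      rw [hva, h.nvisits_start] at *
      omega
    obtain hcard | hsink := hin v hva
    · have hle := hw.nvisits_le_add_encard_inEdges (P := fun _ => True) (by omega) h.2.1 hva
        (fun _ _ => trivial) ih
      simp only [and_true, Set.ofPred_mem_eq] at hle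
      exact_mod_cast hle.trans (add_le_add_right hcard _)
    by_cases hxt : x t = v
    · have hnew : nvisits x t v = nvisits x s v :=
        nvisits_eq_of_forall_ne x (by omega) fun u hsu hut hxu =>
          h.2.2 (u + 1) (by omega) (by omega) (by rw [hw.2.2.2, hxu, hsink])
      have := hd v
      rw [← hxt] at *
      rw [nvisits_succ_self]
      omega
    · rw [nvisits_succ, if_neg hxt]
      exact ih v

theorem nvisits_le_mul (hx : x 0 = a) (t : ℕ) (v : V) :
    nvisits x t v ≤ d v * nvisits x t a := by
  induction t using Nat.strong_induction_on with
  | _ t ih =>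
    obtain rfl | ht := t.eq_zero_or_pos
    · simp [nvisits]
    · obtain ⟨s, hs⟩ := exists_isExcursion (x := x) ht
      rw [hx] at hs
      calc nvisits x t v ≤ nvisits x s v + d v := hw.nvisits_le_of_isExcursion hin hs v
        _ ≤ d v * nvisits x s a + d v := by grw [ih s hs.1]
        _ = d v * nvisits x t a := by rw [hs.nvisits_start]; ring

variable {ρ : V → ℤ} {K : ℤ} (ha : ρ a ≤ K) (hstep : ∀ v i, ρ (succ v i) ≤ max (ρ v) K + 1)
  (hinward : ∀ v, K < ρ v → ∀ k : ℕ, 1 ≤ k →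
    (k : ℕ∞) ≤ {e ∈ inEdges d succ v | ρ e.1 ≤ ρ v}.encard →
      ρ (succ v ((r 0 v + k) % d v)) ≤ ρ v)
include ha hstep hinward

/-- To climb from level `R + 1` to `R + 2` within the excursion, the walk would have to use up all
the rotors pointing inward at a vertex `v` of level `R + 1`; but it has only entered `v` through
distinct edges from levels at most `R + 1`. -/
theorem level_le_of_isExcursion {R : ℤ} {s t : ℕ} (hKR : K ≤ R) (hR : ∀ u ≤ s, ρ (x u) ≤ R)
    (h : IsExcursion x a s t) : ρ (x t) ≤ R + 1 := by
  induction t using Nat.strong_induction_on with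
  | _ t ih =>
    obtain ⟨t, rfl⟩ := Nat.exists_eq_succ_of_ne_zero (Nat.ne_zero_of_lt h.1)
    have hprev : ∀ u ≤ t, ρ (x u) ≤ R + 1 := fun u hut =>
      (le_or_gt u s).elim (fun hus => (hR u hus).trans (by omega)) fun hsu =>
        ih u (by omega) (h.mono hsu (by omega))
    by_contra! hout
    have hvR : ρ (x t) = R + 1 := by
      have := hstep (x t) (r (t + 1) (x t))
      have := hprev t le_rfl
      rw [← hw.2.2.2] at *
      simp only [Nat.succ_eq_add_one] at hout
      omega
    have hunvisited : nvisits x s (x t) = 0 := by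
      rw [nvisits_eq_of_forall_ne x s.zero_le fun u _ hus hxu => ?_]
      · simp [nvisits]
      · have := hR u hus.le
        rw [hxu] at this
        omega
    have hentries := hw.nvisits_le_add_encard_inEdges (v := x t) (P := fun v => ρ v ≤ ρ (x t))
      (Nat.lt_succ_iff.1 h.1) h.2.1 (fun hta => by rw [hta] at hvR; omega)
      (fun u hu => (hprev u hu.2.le).trans_eq hvR.symm)
      fun v => (nvisits_mono x v t.le_succ).trans (hw.nvisits_le_of_isExcursion hin h v)
    rw [hunvisited, Nat.cast_zero, zero_add] at hentries
    have := hinward (x t) (by omega) _ (by rw [nvisits_succ_self]; omega) hentries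
    rw [← hw.rotor_eq, ← hw.2.2.2] at this
    exact absurd hout (by simp only [Nat.succ_eq_add_one]; omega)

theorem level_le (hx : x 0 = a) (t : ℕ) : ρ (x t) ≤ K + nvisits x t a := by
  induction t using Nat.strong_induction_on with
  | _ t ih =>
    obtain rfl | ht := t.eq_zero_or_pos
    · simpa [nvisits, hx] using ha
    · obtain ⟨s, hs⟩ := exists_isExcursion (x := x) ht
      rw [hx] at hs
      rw [hs.nvisits_start, Nat.cast_succ, ← add_assoc]
      refine hw.level_le_of_isExcursion hin ha hstep hinward (by omega) (fun u hus => ?_) hs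
      have : nvisits x u a ≤ nvisits x s a := nvisits_mono x a hus
      have := ih u (hus.trans_lt hs.1)
      omega

end Confinement

section Discrepancy

variable (hw : IsRotorWalk d succ x r) (f : V → ℝ)
include hw

theorem sum_increments_eq (t : ℕ) (v : V) :
    ∑ s ∈ Finset.range t with x s = v, (f (x (s + 1)) - f (x s)) =
      ∑ s ∈ Finset.range t with x s = v, (f (succ v (r (s + 1) v)) - f v) :=
  Finset.sum_congr rfl fun s hs => by rw [hw.2.2.2, (Finset.mem_filter.1 hs).2]

theorem abs_sum_increments_le {v : V} (hf : rotorLaplacian d succ f v = 0) (t : ℕ) :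
    |∑ s ∈ Finset.range t with x s = v, (f (x (s + 1)) - f (x s))| ≤
      rotorVariation d succ f v := by
  rw [hw.sum_increments_eq]
  exact hw.abs_sum_visits_le hf t

theorem sum_increments_of_sink {a v : V} (hv : ∀ i, succ v i = a) (t : ℕ) :
    ∑ s ∈ Finset.range t with x s = v, (f (x (s + 1)) - f (x s)) =
      nvisits x t v * (f a - f v) := by
  simp [hw.sum_increments_eq, hv, nvisits, mul_sub]

variable {f}

/-- The Holroyd–Propp bound: the walk telescopes `h` from `h a` to `h (x t)`, the sinks contribute
the discrepancy to be estimated, and every other vertex contributes at most the variation of `h`. -/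
theorem abs_discrepancy_le {a b c : V} (hx : x 0 = a) (hbc : b ≠ c) (hb : ∀ i, succ b i = a)
    (hc : ∀ i, succ c i = a) {h : V → ℝ} (h01 : ∀ v, h v ∈ Set.Icc (0 : ℝ) 1) (hhb : h b = 1)
    (hhc : h c = 0) (hharm : ∀ v, v ≠ b → v ≠ c → rotorLaplacian d succ h v = 0) {t : ℕ}
    {B : Finset V} (hbB : b ∉ B) (hcB : c ∉ B) (hB : ∀ s < t, x s = b ∨ x s = c ∨ x s ∈ B) :
    |((nvisits x t b : ℝ) + nvisits x t c) * h a - nvisits x t b| ≤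
      1 + ∑ v ∈ B, rotorVariation d succ h v := by
  set δ : V → ℝ := fun v =>
    ∑ s ∈ Finset.range t with x s = v, (h (x (s + 1)) - h (x s)) with hδ
  have htelescope : h (x t) - h a = ∑ v ∈ {b, c} ∪ B, δ v := by
    rw [← hx, ← Finset.sum_range_sub fun s => h (x s)]
    exact (Finset.sum_fiberwise_of_maps_to (fun s hs => by
      simpa [or_assoc] using hB s (Finset.mem_range.1 hs)) _).symm
  have hsinks : ∑ v ∈ {b, c}, δ v = nvisits x t b * (h a - 1) + nvisits x t c * h a := by
    rw [Finset.sum_pair hbc, ← hhb, hδ]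
    simp only [hw.sum_increments_of_sink h hb, hw.sum_increments_of_sink h hc, hhc, sub_zero]
  have hrest : |∑ v ∈ B, δ v| ≤ ∑ v ∈ B, rotorVariation d succ h v := by
    refine (Finset.abs_sum_le_sum_abs _ _).trans (Finset.sum_le_sum fun v hv => ?_)
    exact hw.abs_sum_increments_le h
      (hharm v (ne_of_mem_of_not_mem hv hbB) (ne_of_mem_of_not_mem hv hcB)) t
  rw [Finset.sum_union (by simp [hbB, hcB]), hsinks] at htelescope
  have hend : |h (x t) - h a| ≤ 1 := abs_sub_le_of_le_of_le (h01 _).1 (h01 _).2 (h01 _).1 (h01 _).2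
    |>.trans_eq (sub_zero 1)
  calc |((nvisits x t b : ℝ) + nvisits x t c) * h a - nvisits x t b|
      = |(h (x t) - h a) - ∑ v ∈ B, δ v| := by
        rw [htelescope]
        ring_nf
    _ ≤ |h (x t) - h a| + |∑ v ∈ B, δ v| := abs_sub _ _
    _ ≤ 1 + ∑ v ∈ B, rotorVariation d succ h v := add_le_add hend hrest

end Discrepancy

end IsRotorWalk

namespace Realizes

variable {V : Type*} {d : V → ℕ} {succ : V → ℕ → V} {p : V → V → ℝ} (hp : Realizes d succ p)
include hp

theorem tsum_mul_eq (f : V → ℝ) (u : V) :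
    ∑' w, p u w * f w = (∑ i ∈ Finset.range (d u), f (succ u i)) / d u := by
  rw [tsum_eq_sum (s := (Finset.range (d u)).image (succ u)) fun w hw => ?_,
    Finset.sum_comp f (succ u), Finset.sum_div]
  · refine Finset.sum_congr rfl fun w _ => ?_
    rw [hp.2, nsmul_eq_mul, div_mul_eq_mul_div]
  · rw [hp.2, Finset.filter_eq_empty_iff.2 fun i hi hiw => hw (Finset.mem_image.2 ⟨i, hi, hiw⟩)]
    simp

theorem tsum_mul_mono {f g : V → ℝ} (hfg : ∀ v, f v ≤ g v) (u : V) :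
    ∑' w, p u w * f w ≤ ∑' w, p u w * g w := by
  rw [hp.tsum_mul_eq, hp.tsum_mul_eq]
  gcongr
  exact hfg _

theorem tsum_mul_const (k : ℝ) (u : V) : ∑' w, p u w * k = k := by
  have : (d u : ℝ) ≠ 0 := by exact_mod_cast (hp.1 u).ne'
  simp [hp.tsum_mul_eq (fun _ => k), this]

section HittingProbability

variable (b c : V)

theorem hitAux_mem_Icc (t : ℕ) (v : V) : hitAux p b c t v ∈ Set.Icc (0 : ℝ) 1 := by
  induction t generalizing v with
  | zero => unfold hitAux; split_ifs <;> simp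
  | succ t ih =>
    unfold hitAux
    split_ifs
    · simp
    · simp
    · exact ⟨(hp.tsum_mul_const 0 v).symm.trans_le (hp.tsum_mul_mono (fun w => (ih w).1) v),
        (hp.tsum_mul_mono (fun w => (ih w).2) v).trans_eq (hp.tsum_mul_const 1 v)⟩

theorem hitAux_mono (v : V) : Monotone fun t => hitAux p b c t v := by
  refine monotone_nat_of_le_succ fun t => ?_
  induction t generalizing v with
  | zero =>
    by_cases hv : v = b
    · simp [hitAux, hv]
    · rw [hitAux, if_neg hv]
      exact (hp.hitAux_mem_Icc b c 1 v).1
  | succ t ih =>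
    rw [hitAux, hitAux]
    split_ifs
    exacts [le_rfl, le_rfl, hp.tsum_mul_mono ih v]

theorem tendsto_hitAux (v : V) :
    Filter.Tendsto (fun t => hitAux p b c t v) Filter.atTop (nhds (hitProb p b c v)) :=
  tendsto_atTop_ciSup (hp.hitAux_mono b c v)
    ⟨1, Set.forall_mem_range.2 fun t => (hp.hitAux_mem_Icc b c t v).2⟩

theorem hitProb_mem_Icc (v : V) : hitProb p b c v ∈ Set.Icc (0 : ℝ) 1 :=
  isClosed_Icc.mem_of_tendsto (hp.tendsto_hitAux b c v)
    (Filter.Eventually.of_forall fun t => hp.hitAux_mem_Icc b c t v)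

variable {b c}

theorem rotorLaplacian_hitProb {v : V} (hb : v ≠ b) (hc : v ≠ c) :
    rotorLaplacian d succ (hitProb p b c) v = 0 := by
  have hd : (d v : ℝ) ≠ 0 := by exact_mod_cast (hp.1 v).ne'
  have hstep : Filter.Tendsto (fun t => hitAux p b c (t + 1) v) Filter.atTop
      (nhds ((∑ i ∈ Finset.range (d v), hitProb p b c (succ v i)) / d v)) := by
    simp only [hitAux, if_neg hb, if_neg hc, hp.tsum_mul_eq]
    exact (tendsto_finsetSum _ fun i _ => hp.tendsto_hitAux b c _).div_const _
  have hmean := tendsto_nhds_unique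
    ((hp.tendsto_hitAux b c v).comp (Filter.tendsto_add_atTop_nat 1)) hstep
  simp [rotorLaplacian, hmean, mul_div_cancel₀ _ hd]

end HittingProbability

end Realizes

section HitProb

variable {V : Type*} (p : V → V → ℝ)

theorem hitProb_self (b c : V) : hitProb p b c b = 1 := by
  have : ∀ t, hitAux p b c t b = 1 := fun t => by cases t <;> simp [hitAux]
  simp [hitProb, this]

theorem hitProb_sink {b c : V} (hbc : b ≠ c) : hitProb p b c c = 0 := by
  have : ∀ t, hitAux p b c t c = 0 := fun t => by cases t <;> simp [hitAux, hbc.symm]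
  simp [hitProb, this]

theorem hitProb_equiv (e : V ≃ V) (he : ∀ u v, p (e u) (e v) = p u v) (b c v : V) :
    hitProb p (e b) (e c) (e v) = hitProb p b c v := by
  have haux : ∀ t v, hitAux p (e b) (e c) t (e v) = hitAux p b c t v := by
    intro t
    induction t with
    | zero => simp [hitAux]
    | succ t ih =>
      intro v
      simp only [hitAux, e.apply_eq_iff_eq]
      rw [← e.tsum_eq]
      simp only [he, ih]
  simp only [hitProb, haux]

end HitProb

section Uniqueness

variable {V : Type*} {d : V → ℕ} {succ : V → ℕ → V}

theorem rotorLaplacian_add (f g : V → ℝ) (u : V) :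
    rotorLaplacian d succ (fun v => f v + g v) u =
      rotorLaplacian d succ f u + rotorLaplacian d succ g u := by
  simp only [rotorLaplacian, add_sub_add_comm, Finset.sum_add_distrib]

theorem rotorLaplacian_sub (f g : V → ℝ) (u : V) :
    rotorLaplacian d succ (fun v => f v - g v) u =
      rotorLaplacian d succ f u - rotorLaplacian d succ g u := by
  simp only [rotorLaplacian, sub_sub_sub_comm, Finset.sum_sub_distrib]

theorem rotorLaplacian_const_mul (k : ℝ) (f : V → ℝ) (u : V) :
    rotorLaplacian d succ (fun v => k * f v) u = k * rotorLaplacian d succ f u := by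
  simp only [rotorLaplacian, ← mul_sub, Finset.mul_sum]

variable {S : Set V} (hS : ∀ v, ∃ w ∈ S, Relation.ReflTransGen (RotorStep d succ) v w)
include hS

theorem nonpos_of_subharmonic {u : V → ℝ} (hfin : {v | 0 < u v}.Finite)
    (hu : ∀ v ∉ S, 0 ≤ rotorLaplacian d succ u v) (huS : ∀ v ∈ S, u v ≤ 0) (v : V) :
    u v ≤ 0 := by
  by_contra! hv
  obtain ⟨m, hm, hmax⟩ := hfin.exists_maximalFor u _ ⟨v, hv⟩
  have hm : 0 < u m := hm
  have hle : ∀ w, u w ≤ u m := fun w =>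
    (le_or_gt (u w) 0).elim (fun h => h.trans hm.le) fun h =>
      (le_total (u w) (u m)).elim id fun hmw => hmax h hmw
  have hmaximizers : ∀ w, Relation.ReflTransGen (RotorStep d succ) m w → u w = u m := by
    intro w hmw
    induction hmw with
    | refl => rfl
    | @tail y _ _ hyz ih =>
      obtain ⟨i, hi, rfl⟩ := hyz
      have hterm : ∀ j ∈ Finset.range (d y), u (succ y j) - u y ≤ 0 := fun j _ => by
        linarith [hle (succ y j)]
      have hzero := (Finset.sum_eq_zero_iff_of_nonpos hterm).1
        ((Finset.sum_nonpos hterm).antisymm (hu y fun hyS => by linarith [huS y hyS]))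
      linarith [hzero i (Finset.mem_range.2 hi)]
  obtain ⟨w, hwS, hmw⟩ := hS m
  linarith [huS w hwS, hmaximizers w hmw]

variable {g : V → ℝ} (hg : ∀ v, 0 ≤ g v) (hgS : ∀ v ∉ S, rotorLaplacian d succ g v ≤ 0)
  (hgfin : ∀ L, {v | g v ≤ L}.Finite)
include hg hgS hgfin

/-- The existence of the proper function `g` makes the mechanism recurrent, and `D - ε g` is then
subject to the maximum principle for every `ε > 0`. -/
theorem nonpos_of_harmonic {D : V → ℝ} {M : ℝ} (hM : ∀ v, D v ≤ M)
    (hD : ∀ v ∉ S, rotorLaplacian d succ D v = 0) (hDS : ∀ v ∈ S, D v = 0) (v : V) : D v ≤ 0 := by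
  have hε : ∀ ε > 0, D v - ε * g v ≤ 0 := fun ε hε => by
    refine nonpos_of_subharmonic (u := fun w => D w - ε * g w) hS
      ((hgfin (M / ε)).subset fun w hw => ?_) (fun w hw => ?_) (fun w hw => ?_) v
    · rw [Set.mem_ofPred_eq, le_div_iff₀' hε]
      linarith [hM w, show 0 < D w - ε * g w from hw]
    · rw [rotorLaplacian_sub, rotorLaplacian_const_mul, hD w hw, zero_sub, neg_nonneg]
      exact mul_nonpos_of_nonneg_of_nonpos hε.le (hgS w hw)
    · rw [hDS w hw, zero_sub, neg_nonpos]
      exact mul_nonneg hε.le (hg w)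
  refine le_of_forall_pos_le_add fun η hη => ?_
  have hg1 : 0 < g v + 1 := by linarith [hg v]
  have := hε (η / (g v + 1)) (by positivity)
  have : η / (g v + 1) * g v ≤ η := by
    rw [div_mul_eq_mul_div, div_le_iff₀ hg1]
    nlinarith [hg v]
  linarith

theorem eq_zero_of_harmonic {D : V → ℝ} {M : ℝ} (hM : ∀ v, |D v| ≤ M)
    (hD : ∀ v ∉ S, rotorLaplacian d succ D v = 0) (hDS : ∀ v ∈ S, D v = 0) (v : V) : D v = 0 := by
  refine (nonpos_of_harmonic hS hg hgS hgfin (fun v => (abs_le.1 (hM v)).2) hD hDS v).antisymm ?_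
  have := nonpos_of_harmonic hS hg hgS hgfin (D := fun v => -1 * D v) (M := M)
    (fun v => by linarith [(abs_le.1 (hM v)).1])
    (fun v hv => by rw [rotorLaplacian_const_mul, hD v hv, mul_zero])
    (fun v hv => by rw [hDS v hv, mul_zero]) v
  linarith

end Uniqueness

section Lattice

theorem succZ2_mod (v : ℤ × ℤ) (i : ℕ) : succZ2 v (i % 4) = succZ2 v i := by
  simp only [succZ2, Nat.mod_mod]

theorem sum_succZ2 (f : ℤ × ℤ → ℝ) (v : ℤ × ℤ) :
    ∑ i ∈ Finset.range 4, f (succZ2 v i) =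
      f (v.1, v.2 + 1) + f (v.1 - 1, v.2) + f (v.1, v.2 - 1) + f (v.1 + 1, v.2) := by
  simp [Finset.sum_range_succ, succZ2]

theorem realizes_pZ2 : Realizes (fun _ => 4) succZ2 pZ2 := by
  refine ⟨fun _ => by norm_num, fun ⟨u₁, u₂⟩ ⟨v₁, v₂⟩ => ?_⟩
  simp only [pZ2, Finset.card_filter, Finset.sum_range_succ, Finset.sum_range_zero]
  have hadj : |u₁ - v₁| + |u₂ - v₂| = 1 ↔ (u₁ = v₁ ∧ u₂ + 1 = v₂) ∨ (u₁ - 1 = v₁ ∧ u₂ = v₂) ∨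
      (u₁ = v₁ ∧ u₂ - 1 = v₂) ∨ (u₁ + 1 = v₁ ∧ u₂ = v₂) := by grind
  simp only [succZ2, Prod.mk.injEq, hadj]
  push_cast
  split_ifs <;> first | omega | norm_num

theorem reachable_succZ2 (v w : ℤ × ℤ) :
    Relation.ReflTransGen (RotorStep (fun _ => 4) succZ2) v w := by
  induction h : (w.1 - v.1).natAbs + (w.2 - v.2).natAbs generalizing v with
  | zero =>
    rw [show v = w from Prod.ext (by omega) (by omega)]
  | succ n ih =>
    obtain ⟨i, hi, hn⟩ : ∃ i < 4,
        (w.1 - (succZ2 v i).1).natAbs + (w.2 - (succZ2 v i).2).natAbs = n := by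
      obtain h2 | h2 | h1 | h1 :
        v.2 < w.2 ∨ w.2 < v.2 ∨ w.1 < v.1 ∨ v.1 < w.1 := by omega
      exacts [⟨0, by simp [succZ2]; omega⟩, ⟨2, by simp [succZ2]; omega⟩,
        ⟨1, by simp [succZ2]; omega⟩, ⟨3, by simp [succZ2]; omega⟩]
    exact .head ⟨i, hi, rfl⟩ (ih _ hn)

theorem exists_sink_reachable_succMod (a b c v : ℤ × ℤ) :
    ∃ w ∈ ({b, c} : Set (ℤ × ℤ)),
      Relation.ReflTransGen (RotorStep (dMod b c) (succMod a b c)) v w := by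
  induction reachable_succZ2 v b using Relation.ReflTransGen.head_induction_on with
  | refl => exact ⟨b, by simp, .refl⟩
  | @head v u hvu _ ih =>
    by_cases hv : v = b ∨ v = c
    · exact ⟨v, hv, .refl⟩
    · obtain ⟨w, hw, huw⟩ := ih
      exact ⟨w, hw, .head (by simpa [RotorStep, dMod, succMod, hv] using hvu) huw⟩

theorem inEdges_succMod_subset {a v : ℤ × ℤ} (b c : ℤ × ℤ) (hv : v ≠ a) :
    inEdges (dMod b c) (succMod a b c) v ⊆
      (fun i => (succZ2 v i, (i + 2) % 4)) '' (Finset.range 4 : Set ℕ) := by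
  rintro ⟨u, i⟩ ⟨hi, hu⟩
  by_cases hbc : u = b ∨ u = c
  · exact (hv (by simpa [succMod, hbc] using hu.symm)).elim
  · simp only [dMod, succMod, if_neg hbc] at hi hu
    refine ⟨(i + 2) % 4, by simp [Nat.mod_lt], ?_⟩
    subst hu
    interval_cases i <;> simp [succZ2]

theorem encard_inEdges_succMod_le {a v : ℤ × ℤ} (b c : ℤ × ℤ) (hv : v ≠ a) :
    (inEdges (dMod b c) (succMod a b c) v).encard ≤ dMod b c v ∨ ∀ i, succMod a b c v i = a := by
  by_cases hbc : v = b ∨ v = c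
  · exact .inr fun i => if_pos hbc
  · left
    grw [inEdges_succMod_subset b c hv, Set.encard_image_le]
    rw [dMod, if_neg hbc, Set.encard_coe_eq_coe_finsetCard, Finset.card_range]

end Lattice

section Rings

/-- The index of the square ring around `(1/2, 1/2)` containing `v`, that is
`max |v.1 - 1/2| |v.2 - 1/2| + 1/2`. -/
def ringIndex (v : ℤ × ℤ) : ℤ := max (max v.1 (1 - v.1)) (max v.2 (1 - v.2))

theorem ringIndex_succZ2_le (v : ℤ × ℤ) (i : ℕ) : ringIndex (succZ2 v i) ≤ ringIndex v + 1 := by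
  unfold ringIndex succZ2
  split <;> dsimp only <;> omega

/-- The union of the first `R` rings. -/
noncomputable def ringBox (R : ℕ) : Finset (ℤ × ℤ) :=
  Finset.Icc (1 - R : ℤ) R ×ˢ Finset.Icc (1 - R : ℤ) R

theorem mem_ringBox {R : ℕ} {v : ℤ × ℤ} : v ∈ ringBox R ↔ ringIndex v ≤ R := by
  simp only [ringBox, ringIndex, Finset.mem_product, Finset.mem_Icc]
  omega

theorem card_ringBox (R : ℕ) : (ringBox R).card = (2 * R) ^ 2 := by
  simp only [ringBox, Finset.card_product, Int.card_Icc, sq]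
  congr 1 <;> omega

theorem ringBox_mono : Monotone ringBox := fun R R' h v hv => by
  rw [mem_ringBox] at *
  omega

theorem card_ring (R : ℕ) : (ringBox (R + 1) \ ringBox R).card = 4 * (2 * R + 1) := by
  have : (2 * R.succ) ^ 2 = (2 * R) ^ 2 + 4 * (2 * R + 1) := by rw [Nat.succ_eq_add_one]; ring
  rw [Finset.card_sdiff_of_subset (ringBox_mono R.le_succ), card_ringBox, card_ringBox]
  omega

theorem sum_ringBox_inv_sq_le (R : ℕ) :
    ∑ v ∈ ringBox R, 1 / (ringIndex v : ℝ) ^ 2 ≤ 8 * (harmonic R : ℝ) := by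
  induction R with
  | zero => simp [ringBox]
  | succ R ih =>
    have hring : ∑ v ∈ ringBox (R + 1) \ ringBox R, 1 / (ringIndex v : ℝ) ^ 2 ≤
        8 * ((R : ℝ) + 1)⁻¹ := by
      have hconst : ∀ v ∈ ringBox (R + 1) \ ringBox R,
          1 / (ringIndex v : ℝ) ^ 2 = 1 / ((R : ℝ) + 1) ^ 2 := fun v hv => by
        rw [Finset.mem_sdiff, mem_ringBox, mem_ringBox] at hv
        rw [show ringIndex v = R + 1 by push_cast at hv; omega]
        push_cast
        rfl
      rw [Finset.sum_congr rfl hconst, Finset.sum_const, card_ring, nsmul_eq_mul, mul_one_div,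
        div_le_iff₀ (by positivity), sq, ← mul_assoc, inv_mul_cancel_right₀ (by positivity)]
      push_cast
      linarith
    rw [← Finset.sum_sdiff (ringBox_mono R.le_succ), harmonic_succ]
    push_cast
    linarith

end Rings

section Spiral

theorem arg2_mem_Ico (z : ℂ) : arg2 z ∈ Set.Ico 0 (2 * Real.pi) := by
  have := Complex.neg_pi_lt_arg z
  have := Complex.arg_le_pi z
  have := Real.pi_pos
  unfold arg2
  split_ifs <;> constructor <;> linarith

theorem norm_mul_exp_arg2_mul_I (z : ℂ) : ‖z‖ * Complex.exp (arg2 z * Complex.I) = z := by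
  unfold arg2
  split_ifs
  · push_cast
    rw [add_mul, Complex.exp_add, Complex.exp_two_pi_mul_I, mul_one,
      Complex.norm_mul_exp_arg_mul_I]
  · exact Complex.norm_mul_exp_arg_mul_I z

theorem neg_cos_le_sin_and_sin_lt_cos {t : ℝ} (ht : t ∈ Set.Ico (-(Real.pi / 4)) (Real.pi / 4)) :
    -Real.cos t ≤ Real.sin t ∧ Real.sin t < Real.cos t := by
  have hsqrt : 0 < √2 / 2 := by positivity
  have hplus : 0 < Real.cos (t + Real.pi / 4) :=
    Real.cos_pos_of_mem_Ioo ⟨by linarith [ht.1, Real.pi_pos], by linarith [ht.2]⟩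
  have hminus : 0 ≤ Real.cos (t - Real.pi / 4) :=
    Real.cos_nonneg_of_mem_Icc ⟨by linarith [ht.1], by linarith [ht.2, Real.pi_pos]⟩
  rw [Real.cos_add, Real.cos_pi_div_four, Real.sin_pi_div_four, ← sub_mul] at hplus
  rw [Real.cos_sub, Real.cos_pi_div_four, Real.sin_pi_div_four, ← add_mul] at hminus
  exact ⟨by linarith [nonneg_of_mul_nonneg_left hminus hsqrt],
    by linarith [(pos_iff_pos_of_mul_pos hplus).2 hsqrt]⟩

/-- Rotating `z` back by `m` quarter turns, where `m` is the integer in the definition of the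
spiral configuration, brings it into the sector `-π/4 ≤ arg < π/4`. -/
theorem exists_quarter_turns {z : ℂ} (hz : z ≠ 0) :
    ∃ m ≤ 4, ⌊(1 : ℝ) / 2 + 2 / Real.pi * arg2 z⌋.toNat = m ∧
      -(z * (-Complex.I) ^ m).re ≤ (z * (-Complex.I) ^ m).im ∧
      (z * (-Complex.I) ^ m).im < (z * (-Complex.I) ^ m).re := by
  obtain ⟨h0, h2π⟩ := arg2_mem_Ico z
  have hπ := Real.pi_pos
  set y := (1 : ℝ) / 2 + 2 / Real.pi * arg2 z with hy
  have hy0 : 0 ≤ y := by positivity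
  have hyarg : arg2 z = (y - 1 / 2) * (Real.pi / 2) := by rw [hy]; field_simp; ring
  set m := ⌊y⌋.toNat
  have hmy : (m : ℝ) ≤ y := Nat.floor_le hy0
  have hym : y < m + 1 := Nat.lt_floor_add_one y
  have hm4 : m ≤ 4 := by
    have : y < 5 := by nlinarith
    have : (m : ℝ) < 5 := hmy.trans_lt this
    exact Nat.lt_succ_iff.1 (by exact_mod_cast this)
  set t := arg2 z - m * (Real.pi / 2) with ht
  have hsector : t ∈ Set.Ico (-(Real.pi / 4)) (Real.pi / 4) := by
    constructor <;> nlinarith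
  have hrotate : z * (-Complex.I) ^ m = ‖z‖ * Complex.exp (t * Complex.I) := by
    have hquarter : -Complex.I = Complex.exp (-(Real.pi / 2 * Complex.I)) := by
      rw [Complex.exp_neg, Complex.exp_pi_div_two_mul_I, Complex.inv_I]
    rw [hquarter, ← Complex.exp_nat_mul]
    nth_rw 1 [← norm_mul_exp_arg2_mul_I z]
    rw [mul_assoc, ← Complex.exp_add, ht]
    push_cast
    ring_nf
  have hnorm : 0 < ‖z‖ := norm_pos_iff.2 hz
  refine ⟨m, hm4, rfl, ?_⟩
  rw [hrotate, Complex.re_ofReal_mul, Complex.im_ofReal_mul, Complex.exp_ofReal_mul_I_re,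
    Complex.exp_ofReal_mul_I_im]
  obtain ⟨hlow, hhigh⟩ := neg_cos_le_sin_and_sin_lt_cos hsector
  constructor <;> nlinarith

theorem spiralRotor_cases (v : ℤ × ℤ) :
    (spiralRotor v = 3 ∧ v.2 < v.1 ∧ 1 - v.1 ≤ v.2) ∨
    (spiralRotor v = 0 ∧ 1 - v.1 < v.2 ∧ v.1 ≤ v.2) ∨
    (spiralRotor v = 1 ∧ v.1 < v.2 ∧ v.1 ≤ 1 - v.2) ∨
    (spiralRotor v = 2 ∧ v.1 < 1 - v.2 ∧ v.2 ≤ v.1) := by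
  have hne : (⟨(v.1 : ℝ) - 1 / 2, (v.2 : ℝ) - 1 / 2⟩ : ℂ) ≠ 0 := fun h => by
    have h1 : (v.1 : ℝ) = 1 / 2 := by simpa [sub_eq_zero] using congrArg Complex.re h
    have : (2 * v.1 : ℝ) = 1 := by rw [h1]; norm_num
    have : 2 * v.1 = 1 := by exact_mod_cast this
    omega
  obtain ⟨m, hm, hfloor, hlow, hhigh⟩ := exists_quarter_turns hne
  rw [spiralRotor, hfloor]
  interval_cases m <;>
    simp only [pow_succ, pow_zero, one_mul, mul_neg, neg_mul, Complex.I_mul_I, neg_neg, mul_one,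
      Complex.neg_re, Complex.neg_im, Complex.mul_re, Complex.mul_im, Complex.I_re, Complex.I_im,
      mul_zero, zero_sub, add_zero] at hlow hhigh
  · exact .inl ⟨rfl, by rify; linarith, by rify; linarith⟩
  · exact .inr (.inl ⟨rfl, by rify; linarith, by rify; linarith⟩)
  · exact .inr (.inr (.inl ⟨rfl, by rify; linarith, by rify; linarith⟩))
  · exact .inr (.inr (.inr ⟨rfl, by rify; linarith, by rify; linarith⟩))
  · exact .inl ⟨rfl, by rify; linarith, by rify; linarith⟩

theorem spiralRotor_lt (v : ℤ × ℤ) : spiralRotor v < 4 := Nat.mod_lt _ (by norm_num)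

theorem ringIndex_lt_succZ2_spiralRotor (v : ℤ × ℤ) :
    ringIndex v < ringIndex (succZ2 v (spiralRotor v)) := by
  obtain ⟨h, hv⟩ | ⟨h, hv⟩ | ⟨h, hv⟩ | ⟨h, hv⟩ := spiralRotor_cases v <;>
    simp only [h, succZ2, ringIndex] <;> omega

theorem ringIndex_succZ2_spiralRotor_add_le (v : ℤ × ℤ) {k : ℕ} (hk : k = 1 ∨ k = 2) :
    ringIndex (succZ2 v (spiralRotor v + k)) ≤ ringIndex v := by
  obtain ⟨h, hv⟩ | ⟨h, hv⟩ | ⟨h, hv⟩ | ⟨h, hv⟩ := spiralRotor_cases v <;>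
  obtain rfl | rfl := hk <;>
    simp only [h, succZ2, ringIndex] <;> omega

/-- In the spiral configuration the rotor of `v` initially points outward, and then successively
along the ring, inward, and in a direction that may leave the ring, at a corner. In the latter case
only two edges enter `v` from its own ring and the inner ones. -/
theorem ringIndex_succMod_le {a b c v : ℤ × ℤ} (hva : v ≠ a) (hv : ¬ (v = b ∨ v = c)) {k : ℕ}
    (hk : 1 ≤ k) (hcard : (k : ℕ∞) ≤
      {e ∈ inEdges (dMod b c) (succMod a b c) v | ringIndex e.1 ≤ ringIndex v}.encard) :
    ringIndex (succMod a b c v ((rotInit b c v + k) % dMod b c v)) ≤ ringIndex v := by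
  simp only [succMod, rotInit, dMod, if_neg hv, succZ2_mod]
  set j := spiralRotor v
  have hj : j < 4 := spiralRotor_lt v
  set inner := (Finset.range 4).filter fun i => ringIndex (succZ2 v i) ≤ ringIndex v with hinner
  have hsub : inner ⊆ (Finset.range 4).erase j := fun i hi => by
    simp only [hinner, Finset.mem_filter] at hi
    refine Finset.mem_erase.2 ⟨fun hij => ?_, hi.1⟩
    subst hij
    exact (ringIndex_lt_succZ2_spiralRotor v).not_ge hi.2
  have hkinner : k ≤ inner.card := by
    have himage : {e ∈ inEdges (dMod b c) (succMod a b c) v | ringIndex e.1 ≤ ringIndex v} ⊆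
        (fun i => (succZ2 v i, (i + 2) % 4)) '' inner := by
      rintro e ⟨he, hring⟩
      obtain ⟨i, hi, rfl⟩ := inEdges_succMod_subset b c hva he
      exact ⟨i, Finset.mem_filter.2 ⟨hi, hring⟩, rfl⟩
    grw [himage, Set.encard_image_le, Set.encard_coe_eq_coe_finsetCard] at hcard
    exact_mod_cast hcard
  by_cases hlast : (j + 3) % 4 ∈ inner
  · have : k ≤ 3 := hkinner.trans <| (Finset.card_le_card hsub).trans_eq <| by
      simp [Finset.card_erase_of_mem, hj]
    interval_cases k
    · exact ringIndex_succZ2_spiralRotor_add_le v (.inl rfl)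
    · exact ringIndex_succZ2_spiralRotor_add_le v (.inr rfl)
    · simpa only [succZ2_mod] using (Finset.mem_filter.1 hlast).2
  · have : k ≤ 2 := hkinner.trans <|
      (Finset.card_le_card (Finset.subset_erase.2 ⟨hsub, hlast⟩)).trans_eq <| by
        rw [Finset.card_erase_of_mem, Finset.card_erase_of_mem]
        · simp
        · simpa using hj
        · simp only [Finset.mem_erase, Finset.mem_range]
          omega
    exact ringIndex_succZ2_spiralRotor_add_le v (by omega)

end Spiral

section Waves

/-- The decay rate `α` making `exp (-α y) cos (θ x)` harmonic on `ℤ²`, which is the condition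
`cosh α + cos θ = 2`. -/
noncomputable def decayRate (θ : ℝ) : ℝ := Real.arcosh (2 - Real.cos θ)

theorem one_le_two_sub_cos (θ : ℝ) : 1 ≤ 2 - Real.cos θ := by linarith [Real.cos_le_one θ]

theorem cosh_decayRate (θ : ℝ) : Real.cosh (decayRate θ) = 2 - Real.cos θ :=
  Real.cosh_arcosh (one_le_two_sub_cos θ)

theorem decayRate_nonneg (θ : ℝ) : 0 ≤ decayRate θ := Real.arcosh_nonneg (one_le_two_sub_cos θ)

theorem continuous_decayRate : Continuous decayRate :=
  Real.continuousOn_arcosh.comp_continuous (by fun_prop) one_le_two_sub_cos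

theorem div_three_le_decayRate {θ : ℝ} (hθ : θ ∈ Set.Ioc 0 Real.pi) : θ / 3 ≤ decayRate θ := by
  obtain ⟨h0, hπ⟩ := hθ
  have hsq : θ ^ 2 ≤ 10 := by nlinarith [Real.pi_lt_d2]
  have hcosh : Real.cosh (θ / 3) ≤ 1 + θ ^ 2 / 9 := by
    have hexp := Real.abs_exp_sub_one_le (x := θ ^ 2 / 18) (by
      rw [abs_le]; constructor <;> nlinarith)
    rw [abs_of_nonneg (by positivity : 0 ≤ θ ^ 2 / 18)] at hexp
    calc Real.cosh (θ / 3) ≤ Real.exp ((θ / 3) ^ 2 / 2) := Real.cosh_le_exp_half_sq _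
      _ = Real.exp (θ ^ 2 / 18) := by ring_nf
      _ ≤ 1 + θ ^ 2 / 9 := by linarith [(abs_le.1 hexp).2]
  have hcos : Real.cos θ ≤ 1 - θ ^ 2 / 5 := by
    have hpi : (1 : ℝ) / 5 ≤ 2 / Real.pi ^ 2 := by
      rw [div_le_div_iff₀ (by norm_num) (by positivity)]
      nlinarith [Real.pi_lt_d2, Real.pi_pos]
    nlinarith [Real.cos_le_one_sub_mul_cos_sq (x := θ) (by rwa [abs_of_pos h0])]
  have : Real.cosh (θ / 3) ≤ Real.cosh (decayRate θ) := by
    rw [cosh_decayRate]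
    nlinarith
  rwa [Real.cosh_le_cosh, abs_of_pos (by positivity), abs_of_nonneg (decayRate_nonneg θ)] at this

theorem decayRate_le_sinh (θ : ℝ) : decayRate θ ≤ Real.sinh (decayRate θ) :=
  Real.self_le_sinh_iff.2 (decayRate_nonneg θ)

theorem sinh_decayRate_le {θ : ℝ} (hθ : θ ∈ Set.Ioc 0 Real.pi) :
    Real.sinh (decayRate θ) ≤ 2 * θ := by
  obtain ⟨h0, hπ⟩ := hθ
  refine abs_le_of_sq_le_sq' ?_ (by positivity) |>.2
  have hsq : θ ^ 2 ≤ 10 := by nlinarith [Real.pi_lt_d2]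
  have hcos := Real.one_sub_sq_div_two_le_cos (x := θ)
  calc Real.sinh (decayRate θ) ^ 2 = (1 - Real.cos θ) * (3 - Real.cos θ) := by
        rw [Real.sinh_sq, cosh_decayRate]
        ring
    _ ≤ θ ^ 2 / 2 * (2 + θ ^ 2 / 2) :=
        mul_le_mul (by linarith) (by linarith) (by linarith [Real.cos_le_one θ]) (by positivity)
    _ ≤ (2 * θ) ^ 2 := by nlinarith [sq_nonneg θ]

theorem div_three_le_sinh_decayRate {θ : ℝ} (hθ : θ ∈ Set.Ioc 0 Real.pi) :
    θ / 3 ≤ Real.sinh (decayRate θ) :=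
  (div_three_le_decayRate hθ).trans (decayRate_le_sinh θ)

theorem sinh_decayRate_pos {θ : ℝ} (hθ : θ ∈ Set.Ioc 0 Real.pi) : 0 < Real.sinh (decayRate θ) := by
  linarith [div_three_le_sinh_decayRate hθ, hθ.1]

theorem norm_cexp_sub_cexp_le {z w : ℂ} (hz : z.re ≤ 0) (hw : w.re ≤ 0) :
    ‖Complex.exp z - Complex.exp w‖ ≤ ‖z - w‖ := by
  simpa using (convex_halfSpace_re_le 0).norm_image_sub_le_of_norm_hasDerivWithin_le (C := 1)
    (fun u _ => (Complex.hasDerivAt_exp u).hasDerivWithinAt)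
    (fun u (hu : u.re ≤ 0) => by simpa [Complex.norm_exp] using hu) hw hz

/-- The complex plane wave of frequency `θ`, at height `s` and abscissa `k`. -/
noncomputable def wave (θ s k : ℝ) : ℂ :=
  Complex.exp ((-(s * decayRate θ) : ℝ) + (k * θ : ℝ) * Complex.I)

theorem wave_add (θ s s' k k' : ℝ) : wave θ (s + s') (k + k') = wave θ s k * wave θ s' k' := by
  rw [wave, wave, wave, ← Complex.exp_add]
  push_cast
  ring_nf

theorem norm_wave (θ s k : ℝ) : ‖wave θ s k‖ = Real.exp (-(s * decayRate θ)) := by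
  simp [wave, Complex.norm_exp]

theorem re_wave (θ s k : ℝ) :
    (wave θ s k).re = Real.exp (-(s * decayRate θ)) * Real.cos (k * θ) := by
  rw [wave, Complex.exp_add, ← Complex.ofReal_exp, Complex.re_ofReal_mul,
    Complex.exp_ofReal_mul_I_re]

theorem norm_wave_sub_wave_le {θ : ℝ} (hθ : θ ∈ Set.Ioc 0 Real.pi) {s s' : ℝ} (hs : 0 ≤ s)
    (hs' : 0 ≤ s') (k k' : ℝ) :
    ‖wave θ s k - wave θ s' k'‖ ≤ (2 * |s - s'| + |k - k'|) * θ := by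
  have hα := decayRate_nonneg θ
  have hre : ∀ {s : ℝ} (k : ℝ), 0 ≤ s →
      ((-(s * decayRate θ) : ℝ) + (k * θ : ℝ) * Complex.I : ℂ).re ≤ 0 := fun k hs => by
    simpa using mul_nonneg hs hα
  calc ‖wave θ s k - wave θ s' k'‖
      ≤ ‖((-(s * decayRate θ) : ℝ) + (k * θ : ℝ) * Complex.I : ℂ)
          - ((-(s' * decayRate θ) : ℝ) + (k' * θ : ℝ) * Complex.I)‖ :=
        norm_cexp_sub_cexp_le (hre k hs) (hre k' hs')
    _ = ‖((-((s - s') * decayRate θ) : ℝ) : ℂ) + (((k - k') * θ : ℝ) : ℂ) * Complex.I‖ := by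
        push_cast
        ring_nf
    _ ≤ |s - s'| * decayRate θ + |k - k'| * θ := by
        refine (norm_add_le _ _).trans_eq ?_
        rw [norm_mul, Complex.norm_I, mul_one, Complex.norm_real, Complex.norm_real, norm_neg,
          norm_mul, norm_mul, Real.norm_of_nonneg hα, Real.norm_of_nonneg hθ.1.le,
          Real.norm_eq_abs, Real.norm_eq_abs]
    _ ≤ |s - s'| * (2 * θ) + |k - k'| * θ := by
        gcongr
        exact (decayRate_le_sinh θ).trans (sinh_decayRate_le hθ)
    _ = (2 * |s - s'| + |k - k'|) * θ := by ring

end Waves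

section PotentialKernel

/-- The integrand of the potential kernel at frequency `θ`. -/
noncomputable def kernelIntegrand (v : ℤ × ℤ) (θ : ℝ) : ℝ :=
  (1 - (wave θ |(v.2 : ℝ)| v.1).re) / Real.sinh (decayRate θ)

/-- The potential kernel of simple random walk on `ℤ²`, up to a constant factor, as a Fourier
integral. -/
noncomputable def potentialKernel (v : ℤ × ℤ) : ℝ :=
  ∫ θ in (0 : ℝ)..Real.pi, kernelIntegrand v θ

theorem kernelIntegrand_nonneg (v : ℤ × ℤ) (θ : ℝ) : 0 ≤ kernelIntegrand v θ := by
  have : (wave θ |(v.2 : ℝ)| v.1).re ≤ 1 := (Complex.re_le_norm _).trans <| by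
    rw [norm_wave, Real.exp_le_one_iff]
    have := mul_nonneg (abs_nonneg (v.2 : ℝ)) (decayRate_nonneg θ)
    linarith
  exact div_nonneg (by linarith) (Real.sinh_nonneg_iff.2 (decayRate_nonneg θ))

theorem abs_kernelIntegrand_sub_le (v w : ℤ × ℤ) {θ : ℝ} (hθ : θ ∈ Set.Ioc 0 Real.pi) :
    |kernelIntegrand v θ - kernelIntegrand w θ| ≤
      3 * (2 * |(v.2 : ℝ) - w.2| + |(v.1 : ℝ) - w.1|) := by
  have hwave : |(wave θ |(w.2 : ℝ)| w.1 - wave θ |(v.2 : ℝ)| v.1).re| ≤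
      (2 * |(v.2 : ℝ) - w.2| + |(v.1 : ℝ) - w.1|) * θ := by
    refine (Complex.abs_re_le_norm _).trans <|
      (norm_wave_sub_wave_le hθ (abs_nonneg _) (abs_nonneg _) _ _).trans ?_
    rw [abs_sub_comm (v.1 : ℝ), abs_sub_comm (v.2 : ℝ)]
    exact mul_le_mul_of_nonneg_right
      (by linarith [abs_abs_sub_abs_le (w.2 : ℝ) (v.2 : ℝ)]) hθ.1.le
  rw [kernelIntegrand, kernelIntegrand, ← sub_div, sub_sub_sub_cancel_left, ← Complex.sub_re,
    abs_div, abs_of_pos (sinh_decayRate_pos hθ), div_le_iff₀ (sinh_decayRate_pos hθ)]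
  calc _ ≤ (2 * |(v.2 : ℝ) - w.2| + |(v.1 : ℝ) - w.1|) * (3 * Real.sinh (decayRate θ)) := by
        refine hwave.trans ?_
        gcongr
        linarith [div_three_le_sinh_decayRate hθ]
    _ = _ := by ring

theorem intervalIntegrable_kernelIntegrand (v : ℤ × ℤ) :
    IntervalIntegrable (kernelIntegrand v) MeasureTheory.volume 0 Real.pi := by
  have hα := continuous_decayRate
  have hmeas : Measurable (kernelIntegrand v) :=
    (Continuous.measurable (by unfold wave; fun_prop)).div (Continuous.measurable (by fun_prop))
  rw [intervalIntegrable_iff, Set.uIoc_of_le Real.pi_pos.le]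
  refine MeasureTheory.Measure.integrableOn_of_bounded (M := 3 * (2 * |(v.2 : ℝ)| + |(v.1 : ℝ)|))
    (by simp) hmeas.aestronglyMeasurable ?_
  rw [MeasureTheory.ae_restrict_iff' measurableSet_Ioc]
  refine Filter.Eventually.of_forall fun θ hθ => ?_
  have h0 : kernelIntegrand 0 θ = 0 := by simp [kernelIntegrand, wave]
  simpa [h0] using abs_kernelIntegrand_sub_le v 0 hθ

theorem potentialKernel_nonneg (v : ℤ × ℤ) : 0 ≤ potentialKernel v :=
  intervalIntegral.integral_nonneg Real.pi_pos.le fun θ _ => kernelIntegrand_nonneg v θ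

theorem abs_potentialKernel_sub_le (v w : ℤ × ℤ) :
    |potentialKernel v - potentialKernel w| ≤
      3 * (2 * |(v.2 : ℝ) - w.2| + |(v.1 : ℝ) - w.1|) * Real.pi := by
  rw [potentialKernel, potentialKernel, ← intervalIntegral.integral_sub
    (intervalIntegrable_kernelIntegrand v) (intervalIntegrable_kernelIntegrand w),
    ← Real.norm_eq_abs]
  refine (intervalIntegral.norm_integral_le_of_norm_le_const fun θ hθ =>
    abs_kernelIntegrand_sub_le v w ?_).trans_eq ?_
  · rwa [Set.uIoc_of_le Real.pi_pos.le] at hθ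
  · rw [sub_zero, abs_of_pos Real.pi_pos]

theorem exp_neg_abs_add_one_add (α : ℝ) (y : ℤ) :
    Real.exp (-(|(y : ℝ) + 1| * α)) + Real.exp (-(|(y : ℝ) - 1| * α)) =
      2 * Real.cosh α * Real.exp (-(|(y : ℝ)| * α)) - if y = 0 then 2 * Real.sinh α else 0 := by
  obtain hy | rfl | hy : y ≤ -1 ∨ y = 0 ∨ 1 ≤ y := by omega
  · have hy' : (y : ℝ) ≤ -1 := by exact_mod_cast hy
    rw [abs_of_nonpos (by linarith), abs_of_nonpos (by linarith), abs_of_nonpos (by linarith),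
      if_neg (by omega), Real.cosh_eq, mul_div_cancel₀ _ two_ne_zero, add_mul, ← Real.exp_add,
      ← Real.exp_add]
    ring_nf
  · simp only [Real.sinh_eq, Real.cosh_eq]
    norm_num
    ring
  · have hy' : (1 : ℝ) ≤ y := by exact_mod_cast hy
    rw [abs_of_nonneg (by linarith), abs_of_nonneg (by linarith), abs_of_nonneg (by linarith),
      if_neg (by omega), Real.cosh_eq, mul_div_cancel₀ _ two_ne_zero,
      add_mul (Real.exp α), ← Real.exp_add, ← Real.exp_add]
    ring_nf

theorem rotorLaplacian_kernelIntegrand (v : ℤ × ℤ) {θ : ℝ} (hθ : θ ∈ Set.Ioc 0 Real.pi) :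
    rotorLaplacian (fun _ => 4) succZ2 (fun w => kernelIntegrand w θ) v =
      if v.2 = 0 then 2 * Real.cos (v.1 * θ) else 0 := by
  obtain ⟨x, y⟩ := v
  have hsinh := (sinh_decayRate_pos hθ).ne'
  have hcos : Real.cos ((x + 1) * θ) + Real.cos ((x - 1) * θ) =
      2 * Real.cos θ * Real.cos (x * θ) := by
    rw [add_mul, sub_mul, one_mul, Real.cos_add, Real.cos_sub]
    ring
  have hexp := exp_neg_abs_add_one_add (decayRate θ) y
  rw [cosh_decayRate] at hexp
  rw [rotorLaplacian, Finset.sum_sub_distrib, sum_succZ2 fun w => kernelIntegrand w θ]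
  simp only [kernelIntegrand, re_wave, Finset.sum_const, Finset.card_range, nsmul_eq_mul,
    Int.cast_add, Int.cast_sub, Int.cast_one]
  rw [← add_div, ← add_div, ← add_div, mul_div, ← sub_div, div_eq_iff hsinh]
  split_ifs at hexp ⊢ <;>
  linear_combination (-Real.cos (x * θ)) * hexp - Real.exp (-(|(y : ℝ)| * decayRate θ)) * hcos

theorem rotorLaplacian_potentialKernel (v : ℤ × ℤ) :
    rotorLaplacian (fun _ => 4) succZ2 potentialKernel v = if v = 0 then 2 * Real.pi else 0 := by
  have hint := intervalIntegrable_kernelIntegrand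
  calc rotorLaplacian (fun _ => 4) succZ2 potentialKernel v
      = ∫ θ in (0 : ℝ)..Real.pi,
          rotorLaplacian (fun _ => 4) succZ2 (fun w => kernelIntegrand w θ) v := by
        simp only [rotorLaplacian, potentialKernel]
        rw [intervalIntegral.integral_finsetSum fun i _ => (hint _).sub (hint v)]
        simp only [intervalIntegral.integral_sub (hint _) (hint v)]
    _ = ∫ θ in (0 : ℝ)..Real.pi, if v.2 = 0 then 2 * Real.cos (v.1 * θ) else 0 := by
        refine intervalIntegral.integral_congr_uIoo fun θ hθ =>
          rotorLaplacian_kernelIntegrand v ?_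
        rw [Set.uIoo_of_le Real.pi_pos.le] at hθ
        exact ⟨hθ.1, hθ.2.le⟩
    _ = if v = 0 then 2 * Real.pi else 0 := by
        obtain ⟨x, y⟩ := v
        by_cases hy : y = 0
        · by_cases hx : x = 0
          · simp [hx, hy, mul_comm]
          · simp [hx, hy, intervalIntegral.integral_comp_mul_left, Real.sin_int_mul_pi]
        · simp [hy]

theorem inv_le_kernelIntegrand {v : ℤ × ℤ} {θ : ℝ} (hθ : θ ∈ Set.Ioc 0 Real.pi)
    (hv : 1 ≤ |(v.2 : ℝ)| * θ) : 1 / 8 * θ⁻¹ ≤ kernelIntegrand v θ := by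
  have hexp : Real.exp (-(1 / 3)) ≤ 3 / 4 := by
    rw [Real.exp_neg, inv_le_comm₀ (Real.exp_pos _) (by norm_num)]
    linarith [Real.add_one_le_exp (1 / 3 : ℝ)]
  have hdecay : 1 / 3 ≤ |(v.2 : ℝ)| * decayRate θ := by
    nlinarith [mul_le_mul_of_nonneg_left (div_three_le_decayRate hθ) (abs_nonneg (v.2 : ℝ))]
  have hre : (wave θ |(v.2 : ℝ)| v.1).re ≤ 3 / 4 := (Complex.re_le_norm _).trans <| by
    rw [norm_wave]
    exact (Real.exp_le_exp.2 (by linarith)).trans hexp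
  have hθ0 := hθ.1
  rw [kernelIntegrand, le_div_iff₀ (sinh_decayRate_pos hθ)]
  calc 1 / 8 * θ⁻¹ * Real.sinh (decayRate θ) ≤ 1 / 8 * θ⁻¹ * (2 * θ) := by
        gcongr
        exact sinh_decayRate_le hθ
    _ = 1 / 4 := by
        field_simp
        norm_num
    _ ≤ 1 - (wave θ |(v.2 : ℝ)| v.1).re := by linarith

theorem log_le_potentialKernel {v : ℤ × ℤ} (hv : v.2 ≠ 0) :
    Real.log (Real.pi * |(v.2 : ℝ)|) / 8 ≤ potentialKernel v := by
  have hY : 1 ≤ |(v.2 : ℝ)| := by exact_mod_cast Int.one_le_abs hv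
  set Y := |(v.2 : ℝ)|
  have hY0 : 0 < Y⁻¹ := by positivity
  have hYπ : Y⁻¹ ≤ Real.pi := (inv_le_one_of_one_le₀ hY).trans (by linarith [Real.pi_gt_three])
  have h0 : (0 : ℝ) ∉ Set.uIcc Y⁻¹ Real.pi := by
    rw [Set.uIcc_of_le hYπ]
    exact fun h => hY0.not_ge h.1
  have hint := intervalIntegrable_kernelIntegrand v
  calc Real.log (Real.pi * Y) / 8 = ∫ θ in Y⁻¹..Real.pi, 1 / 8 * θ⁻¹ := by
        rw [intervalIntegral.integral_const_mul, integral_inv h0, div_inv_eq_mul]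
        ring
    _ ≤ ∫ θ in Y⁻¹..Real.pi, kernelIntegrand v θ :=
        intervalIntegral.integral_mono_on hYπ
          ((intervalIntegral.intervalIntegrable_inv (fun θ hθ h => h0 (h ▸ hθ))
            continuousOn_id).const_mul _)
          (hint.mono_set (Set.uIcc_subset_uIcc_right (Set.mem_uIcc_of_le hY0.le hYπ)))
          fun θ hθ => inv_le_kernelIntegrand ⟨hY0.trans_le hθ.1, hθ.2⟩
            ((inv_le_iff_one_le_mul₀' (by linarith)).1 hθ.1)
    _ ≤ potentialKernel v :=
        intervalIntegral.integral_mono_interval hY0.le hYπ le_rfl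
          (Filter.Eventually.of_forall fun θ => kernelIntegrand_nonneg v θ) hint

end PotentialKernel

section QuarterTurn

/-- The anticlockwise rotation of `ℤ²` by a quarter turn. -/
def quarterTurn : ℤ × ℤ ≃ ℤ × ℤ where
  toFun v := (-v.2, v.1)
  invFun v := (v.2, -v.1)
  left_inv v := by simp
  right_inv v := by simp

theorem pZ2_quarterTurn (u v : ℤ × ℤ) : pZ2 (quarterTurn u) (quarterTurn v) = pZ2 u v := by
  simp only [pZ2, quarterTurn, Equiv.coe_fn_mk, neg_sub_neg, abs_sub_comm v.2, add_comm]

theorem sum_succZ2_quarterTurn (f : ℤ × ℤ → ℝ) (v : ℤ × ℤ) :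
    ∑ i ∈ Finset.range 4, f (succZ2 (quarterTurn v) i) =
      ∑ i ∈ Finset.range 4, f (quarterTurn (succZ2 v i)) := by
  rw [sum_succZ2, sum_succZ2 fun w => f (quarterTurn w)]
  simp only [quarterTurn, Equiv.coe_fn_mk, neg_add', neg_sub', sub_neg_eq_add]
  ring

end QuarterTurn

section Dipole

theorem succZ2_sub (v b : ℤ × ℤ) (i : ℕ) : succZ2 v i - b = succZ2 (v - b) i := by
  unfold succZ2
  split <;> ext <;> simp <;> ring

theorem rotorLaplacian_comp_sub (f : ℤ × ℤ → ℝ) (b v : ℤ × ℤ) :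
    rotorLaplacian (fun _ => 4) succZ2 (fun w => f (w - b)) v =
      rotorLaplacian (fun _ => 4) succZ2 f (v - b) := by
  simp only [rotorLaplacian, succZ2_sub]

/-- A proper function witnessing the recurrence of simple random walk on `ℤ²`; the potential kernel
is only shown here to grow in the vertical direction. -/
noncomputable def recurrencePotential (v : ℤ × ℤ) : ℝ :=
  potentialKernel v + potentialKernel (quarterTurn v)

theorem recurrencePotential_nonneg (v : ℤ × ℤ) : 0 ≤ recurrencePotential v :=
  add_nonneg (potentialKernel_nonneg _) (potentialKernel_nonneg _)

theorem rotorLaplacian_recurrencePotential {v : ℤ × ℤ} (hv : v ≠ 0) :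
    rotorLaplacian (fun _ => 4) succZ2 recurrencePotential v = 0 := by
  have hturn : rotorLaplacian (fun _ => 4) succZ2 (fun w => potentialKernel (quarterTurn w)) v =
      rotorLaplacian (fun _ => 4) succZ2 potentialKernel (quarterTurn v) := by
    simp only [rotorLaplacian, Finset.sum_sub_distrib, sum_succZ2_quarterTurn]
  have hv' : quarterTurn v ≠ 0 := fun h => hv (quarterTurn.injective h)
  unfold recurrencePotential
  rw [rotorLaplacian_add, hturn, rotorLaplacian_potentialKernel, rotorLaplacian_potentialKernel,
    if_neg hv, if_neg hv', add_zero]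

theorem finite_recurrencePotential_le (L : ℝ) : {v | recurrencePotential v ≤ L}.Finite := by
  obtain ⟨N, hN⟩ := exists_nat_gt (Real.exp (8 * L))
  have hcoord : ∀ w : ℤ × ℤ, potentialKernel w ≤ L → |w.2| ≤ N := fun w hw => by
    by_contra! hlarge
    have hw2 : w.2 ≠ 0 := fun h => by simp [h] at hlarge; omega
    have hlarge' : (N : ℝ) < |(w.2 : ℝ)| := by exact_mod_cast hlarge
    have hexp : Real.exp (8 * L) < Real.pi * |(w.2 : ℝ)| := by
      nlinarith [Real.pi_gt_three, abs_nonneg (w.2 : ℝ)]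
    have := (Real.lt_log_iff_exp_lt ((Real.exp_pos _).trans hexp)).2 hexp
    linarith [log_le_potentialKernel hw2]
  refine ((Set.finite_Icc (-N : ℤ) N).prod (Set.finite_Icc (-N : ℤ) N)).subset fun v hv => ?_
  have hv : potentialKernel v + potentialKernel (quarterTurn v) ≤ L := hv
  have h2 := hcoord v (by linarith [potentialKernel_nonneg (quarterTurn v)])
  have h1 := hcoord (quarterTurn v) (by linarith [potentialKernel_nonneg v])
  exact ⟨Set.mem_Icc.2 (abs_le.1 h1), Set.mem_Icc.2 (abs_le.1 h2)⟩

/-- The bounded potential of a source at `b` and a sink at `c`. -/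
noncomputable def dipolePotential (b c v : ℤ × ℤ) : ℝ :=
  potentialKernel (v - b) - potentialKernel (v - c)

theorem abs_dipolePotential_le (b c v : ℤ × ℤ) :
    |dipolePotential b c v| ≤
      3 * (2 * |(c.2 : ℝ) - b.2| + |(c.1 : ℝ) - b.1|) * Real.pi := by
  simpa [dipolePotential] using abs_potentialKernel_sub_le (v - b) (v - c)

theorem rotorLaplacian_dipolePotential (b c v : ℤ × ℤ) :
    rotorLaplacian (fun _ => 4) succZ2 (dipolePotential b c) v =
      (if v = b then 2 * Real.pi else 0) - if v = c then 2 * Real.pi else 0 := by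
  unfold dipolePotential
  rw [rotorLaplacian_sub, rotorLaplacian_comp_sub, rotorLaplacian_comp_sub,
    rotorLaplacian_potentialKernel, rotorLaplacian_potentialKernel]
  simp only [sub_eq_zero]

variable {b c : ℤ × ℤ} (hbc : b ≠ c)
include hbc

theorem dipolePotential_sub_eq (v : ℤ × ℤ) :
    dipolePotential b c v - dipolePotential b c c =
      (dipolePotential b c b - dipolePotential b c c) * hitProb pZ2 b c v := by
  set F := dipolePotential b c
  set M := 3 * (2 * |(c.2 : ℝ) - b.2| + |(c.1 : ℝ) - b.1|) * Real.pi
  have hF : ∀ v w, |F v - F w| ≤ M + M := fun v w =>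
    (abs_sub _ _).trans (add_le_add (abs_dipolePotential_le b c v) (abs_dipolePotential_le b c w))
  have hbound : ∀ v, |F v - F c - (F b - F c) * hitProb pZ2 b c v| ≤ M + M + (M + M) := fun v => by
    obtain ⟨h0, h1⟩ := realizes_pZ2.hitProb_mem_Icc b c v
    refine (abs_sub _ _).trans (add_le_add (hF v c) ?_)
    rw [abs_mul, abs_of_nonneg h0]
    exact (mul_le_of_le_one_right (abs_nonneg _) h1).trans (hF b c)
  have hharm : ∀ v ∉ ({b, c} : Set (ℤ × ℤ)), rotorLaplacian (fun _ => 4) succZ2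
      (fun v => F v - F c - (F b - F c) * hitProb pZ2 b c v) v = 0 := fun v hv => by
    simp only [Set.mem_insert_iff, Set.mem_singleton_iff, not_or] at hv
    have hconst : rotorLaplacian (fun _ => 4) succZ2 (fun _ => F c) v = 0 := by
      simp [rotorLaplacian]
    rw [rotorLaplacian_sub (fun v => F v - F c), rotorLaplacian_sub F, rotorLaplacian_const_mul,
      realizes_pZ2.rotorLaplacian_hitProb hv.1 hv.2, rotorLaplacian_dipolePotential, hconst,
      if_neg hv.1, if_neg hv.2]
    ring
  refine sub_eq_zero.1 <| eq_zero_of_harmonic (g := fun v => recurrencePotential (v - b))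
    (fun v => ⟨b, by simp, reachable_succZ2 v b⟩) (fun v => recurrencePotential_nonneg _)
    (fun v hv => ?_) (fun L => (finite_recurrencePotential_le L).preimage
      (sub_left_injective.injOn)) hbound hharm (fun v hv => ?_) v
  · rw [rotorLaplacian_comp_sub, rotorLaplacian_recurrencePotential]
    exact sub_ne_zero.2 fun h => hv (.inl h)
  · obtain rfl | rfl := hv
    · rw [hitProb_self, mul_one, sub_self]
    · rw [hitProb_sink pZ2 hbc, mul_zero, sub_zero, sub_self]

theorem dipolePotential_ne : dipolePotential b c b ≠ dipolePotential b c c := fun h => by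
  have hconst : ∀ v, dipolePotential b c v = dipolePotential b c c := fun v => by
    simpa [h, sub_eq_zero] using dipolePotential_sub_eq hbc v
  have hlap := rotorLaplacian_dipolePotential b c b
  simp [rotorLaplacian, hconst, hbc, Real.pi_ne_zero] at hlap

end Dipole

section Gradient

theorem integral_mul_exp_neg_le {k : ℝ} (hk : 0 < k) {x : ℝ} (hx : 0 ≤ x) :
    ∫ θ in (0 : ℝ)..x, θ * Real.exp (-(k * θ)) ≤ 1 / k ^ 2 := by
  have hderiv : ∀ θ : ℝ, HasDerivAt (fun θ => -((θ / k + 1 / k ^ 2) * Real.exp (-(k * θ))))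
      (θ * Real.exp (-(k * θ))) θ := fun θ => by
    have hexp : HasDerivAt (fun θ => -(k * θ)) (-(k * 1)) θ := ((hasDerivAt_id θ).const_mul k).neg
    refine ((((hasDerivAt_id θ).div_const k).add_const (1 / k ^ 2)).mul hexp.exp).neg.congr_deriv ?_
    rw [id]
    field_simp
    ring
  rw [intervalIntegral.integral_eq_sub_of_hasDerivAt (fun θ _ => hderiv θ)
    (Continuous.intervalIntegrable (by fun_prop) _ _)]
  have : 0 ≤ (x / k + 1 / k ^ 2) * Real.exp (-(k * x)) := by positivity
  simpa using this

variable {b c v w : ℤ × ℤ} {M m : ℝ} (hb : (b.2 : ℝ) ≤ M) (hc : (c.2 : ℝ) ≤ M)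
  (hv : M + m ≤ v.2) (hw : M + m ≤ w.2)
include hb hc hv hw

/-- Above height `M` waves factor, so that each of the two differences contributes a factor `θ`,
one of which cancels the singularity of the kernel. -/
theorem abs_kernelIntegrand_second_difference_le {θ : ℝ} (hθ : θ ∈ Set.Ioc 0 Real.pi)
    (hm : 0 ≤ m) :
    |(kernelIntegrand (v - b) θ - kernelIntegrand (v - c) θ) -
        (kernelIntegrand (w - b) θ - kernelIntegrand (w - c) θ)| ≤
      3 * (2 * |(v.2 : ℝ) - w.2| + |(v.1 : ℝ) - w.1|) *
        (2 * |(b.2 : ℝ) - c.2| + |(b.1 : ℝ) - c.1|) * (θ * Real.exp (-(m / 3 * θ))) := by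
  have hθ0 := hθ.1
  have hsinh := sinh_decayRate_pos hθ
  set p : ℤ × ℤ → ℂ := fun u => wave θ (u.2 - M - m) u.1
  set q : ℤ × ℤ → ℂ := fun e => wave θ (M - e.2) (-e.1)
  have hfactor : ∀ u e : ℤ × ℤ, M + m ≤ u.2 → (e.2 : ℝ) ≤ M →
      kernelIntegrand (u - e) θ =
        (1 - (wave θ m 0 * (p u * q e)).re) / Real.sinh (decayRate θ) := fun u e hu he => by
    simp only [p, q, kernelIntegrand, ← wave_add, Prod.fst_sub, Prod.snd_sub, Int.cast_sub]
    rw [abs_of_nonneg (by linarith)]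
    ring_nf
  have hp : ‖p v - p w‖ ≤ (2 * |(v.2 : ℝ) - w.2| + |(v.1 : ℝ) - w.1|) * θ := by
    simpa using norm_wave_sub_wave_le hθ (s := v.2 - M - m) (s' := w.2 - M - m) (by linarith)
      (by linarith) v.1 w.1
  have hq : ‖q b - q c‖ ≤ (2 * |(b.2 : ℝ) - c.2| + |(b.1 : ℝ) - c.1|) * θ := by
    have := norm_wave_sub_wave_le hθ (sub_nonneg.2 hb) (sub_nonneg.2 hc) (-b.1) (-c.1)
    rwa [sub_sub_sub_cancel_left, neg_sub_neg, abs_sub_comm (c.2 : ℝ), abs_sub_comm (c.1 : ℝ)]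
      at this
  have hdecay : ‖wave θ m 0‖ ≤ Real.exp (-(m / 3 * θ)) := by
    rw [norm_wave, Real.exp_le_exp]
    nlinarith [mul_le_mul_of_nonneg_left (div_three_le_decayRate hθ) hm]
  calc _ = |(wave θ m 0 * ((p v - p w) * (q b - q c))).re| / Real.sinh (decayRate θ) := by
        rw [hfactor v b hv hb, hfactor v c hv hc, hfactor w b hw hb, hfactor w c hw hc,
          ← abs_of_pos hsinh, ← abs_div, ← abs_neg, abs_of_pos hsinh]
        simp only [sub_mul, mul_sub, Complex.sub_re]
        ring_nf
    _ ≤ Real.exp (-(m / 3 * θ)) * (((2 * |(v.2 : ℝ) - w.2| + |(v.1 : ℝ) - w.1|) * θ) *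
          ((2 * |(b.2 : ℝ) - c.2| + |(b.1 : ℝ) - c.1|) * θ)) / (θ / 3) := by
        gcongr
        · refine (Complex.abs_re_le_norm _).trans ?_
          rw [norm_mul, norm_mul]
          gcongr
        · exact div_three_le_sinh_decayRate hθ
    _ = _ := by
        field_simp

theorem abs_dipolePotential_sub_le (hm : 0 < m) :
    |dipolePotential b c v - dipolePotential b c w| ≤
      27 * (2 * |(v.2 : ℝ) - w.2| + |(v.1 : ℝ) - w.1|) *
        (2 * |(b.2 : ℝ) - c.2| + |(b.1 : ℝ) - c.1|) / m ^ 2 := by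
  have hint := intervalIntegrable_kernelIntegrand
  have hexp : IntervalIntegrable (fun θ : ℝ => θ * Real.exp (-(m / 3 * θ)))
      MeasureTheory.volume 0 Real.pi := Continuous.intervalIntegrable (by fun_prop) _ _
  calc |dipolePotential b c v - dipolePotential b c w|
      = ‖∫ θ in (0 : ℝ)..Real.pi, (kernelIntegrand (v - b) θ - kernelIntegrand (v - c) θ) -
          (kernelIntegrand (w - b) θ - kernelIntegrand (w - c) θ)‖ := by
        rw [intervalIntegral.integral_sub ((hint _).sub (hint _)) ((hint _).sub (hint _)),
          intervalIntegral.integral_sub (hint _) (hint _),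
          intervalIntegral.integral_sub (hint _) (hint _)]
        rfl
    _ ≤ ∫ θ in (0 : ℝ)..Real.pi, 3 * (2 * |(v.2 : ℝ) - w.2| + |(v.1 : ℝ) - w.1|) *
          (2 * |(b.2 : ℝ) - c.2| + |(b.1 : ℝ) - c.1|) * (θ * Real.exp (-(m / 3 * θ))) :=
        intervalIntegral.norm_integral_le_of_norm_le Real.pi_pos.le
          (Filter.Eventually.of_forall fun θ hθ =>
            abs_kernelIntegrand_second_difference_le hb hc hv hw hθ hm.le) (hexp.const_mul _)
    _ ≤ 3 * (2 * |(v.2 : ℝ) - w.2| + |(v.1 : ℝ) - w.1|) *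
          (2 * |(b.2 : ℝ) - c.2| + |(b.1 : ℝ) - c.1|) * (1 / (m / 3) ^ 2) := by
        rw [intervalIntegral.integral_const_mul]
        gcongr
        exact integral_mul_exp_neg_le (by positivity) Real.pi_pos.le
    _ = _ := by
        field_simp
        ring

end Gradient

section Variation

theorem rotorVariation_le {V : Type*} {d : V → ℕ} {succ : V → ℕ → V} {f : V → ℝ} {v : V} {B : ℝ}
    (hB : ∀ i, |f (succ v i) - f v| ≤ B) : rotorVariation d succ f v ≤ d v * B := by
  simpa [rotorVariation] using Finset.sum_le_card_nsmul (Finset.range (d v)) _ B fun i _ => hB i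

theorem rotorVariation_nonneg {V : Type*} (d : V → ℕ) (succ : V → ℕ → V) (f : V → ℝ) (v : V) :
    0 ≤ rotorVariation d succ f v :=
  Finset.sum_nonneg fun _ _ => abs_nonneg _

theorem rotorVariation_hitProb_le_four (b c v : ℤ × ℤ) :
    rotorVariation (fun _ => 4) succZ2 (hitProb pZ2 b c) v ≤ 4 := by
  have h01 := realizes_pZ2.hitProb_mem_Icc b c
  simpa using rotorVariation_le (d := fun _ => 4) (succ := succZ2) (v := v) (B := 1) fun i =>
    abs_sub_le_of_nonneg_of_le (h01 _).1 (h01 _).2 (h01 v).1 (h01 v).2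

theorem rotorVariation_hitProb_quarterTurn (b c v : ℤ × ℤ) :
    rotorVariation (fun _ => 4) succZ2
        (hitProb pZ2 (quarterTurn b) (quarterTurn c)) (quarterTurn v) =
      rotorVariation (fun _ => 4) succZ2 (hitProb pZ2 b c) v := by
  rw [rotorVariation, sum_succZ2_quarterTurn fun w =>
    |hitProb pZ2 (quarterTurn b) (quarterTurn c) w -
      hitProb pZ2 (quarterTurn b) (quarterTurn c) (quarterTurn v)|]
  simp only [hitProb_equiv pZ2 quarterTurn pZ2_quarterTurn, rotorVariation]

theorem succZ2_sub_snd_add_fst_le (v : ℤ × ℤ) (i : ℕ) :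
    2 * |((succZ2 v i).2 : ℝ) - v.2| + |((succZ2 v i).1 : ℝ) - v.1| ≤ 2 := by
  unfold succZ2
  split <;> norm_num

theorem sub_one_le_succZ2_snd (v : ℤ × ℤ) (i : ℕ) : (v.2 : ℝ) - 1 ≤ (succZ2 v i).2 := by
  unfold succZ2
  split <;> norm_num
  linarith

theorem abs_hitProb_sub_le {b c v w : ℤ × ℤ} (hbc : b ≠ c) {M m : ℝ} (hb : (b.2 : ℝ) ≤ M)
    (hc : (c.2 : ℝ) ≤ M) (hv : M + m ≤ v.2) (hw : M + m ≤ w.2) (hm : 0 < m) :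
    |hitProb pZ2 b c v - hitProb pZ2 b c w| ≤
      27 * (2 * |(v.2 : ℝ) - w.2| + |(v.1 : ℝ) - w.1|) *
        (2 * |(b.2 : ℝ) - c.2| + |(b.1 : ℝ) - c.1|) / m ^ 2 /
          |dipolePotential b c b - dipolePotential b c c| := by
  rw [le_div_iff₀' (abs_pos.2 (sub_ne_zero.2 (dipolePotential_ne hbc))), ← abs_mul, mul_sub,
    ← dipolePotential_sub_eq hbc, ← dipolePotential_sub_eq hbc, sub_sub_sub_cancel_right]
  exact abs_dipolePotential_sub_le hb hc hv hw hm

theorem exists_rotorVariation_mul_height_sq_le {b c : ℤ × ℤ} (hbc : b ≠ c) :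
    ∃ C : ℝ, ∀ v : ℤ × ℤ, 0 ≤ v.2 →
      rotorVariation (fun _ => 4) succZ2 (hitProb pZ2 b c) v * (v.2 : ℝ) ^ 2 ≤ C := by
  set h := hitProb pZ2 b c
  set E := |dipolePotential b c b - dipolePotential b c c|
  set M := max |(b.2 : ℝ)| |(c.2 : ℝ)|
  set L := 2 * |(b.2 : ℝ) - c.2| + |(b.1 : ℝ) - c.1|
  refine ⟨16 * (54 * L / E) + 16 * (M + 1) ^ 2, fun v hv => ?_⟩
  have : (0 : ℝ) ≤ v.2 := by exact_mod_cast hv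
  have hM : 0 ≤ M := (abs_nonneg _).trans (le_max_left _ _)
  have hL : 0 ≤ 54 * L / E := by positivity
  obtain hlow | hhigh := le_or_gt (v.2 : ℝ) (2 * (M + 1))
  · calc rotorVariation (fun _ => 4) succZ2 h v * (v.2 : ℝ) ^ 2 ≤ 4 * (2 * (M + 1)) ^ 2 := by
          gcongr
          exact rotorVariation_hitProb_le_four b c v
      _ ≤ _ := by linarith
  · obtain ⟨m, hm⟩ : ∃ m, M + m = (v.2 : ℝ) - 1 := ⟨_, add_sub_cancel _ _⟩
    have hm0 : 0 < m := by linarith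
    have hstep : ∀ i, |h (succZ2 v i) - h v| ≤ 54 * L / E / m ^ 2 := fun i => by
      calc _ ≤ _ := abs_hitProb_sub_le hbc ((le_abs_self _).trans (le_max_left _ _))
            ((le_abs_self _).trans (le_max_right _ _))
            (hm.trans_le (sub_one_le_succZ2_snd v i))
            (show M + m ≤ v.2 by linarith) hm0
        _ ≤ 27 * 2 * L / m ^ 2 / E := by
          gcongr
          exact succZ2_sub_snd_add_fst_le v i
        _ = _ := by ring
    calc rotorVariation (fun _ => 4) succZ2 h v * (v.2 : ℝ) ^ 2
        ≤ ((4 : ℕ) * (54 * L / E / m ^ 2)) * (2 * m) ^ 2 := by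
          gcongr
          · exact rotorVariation_le hstep
          · linarith
      _ = 16 * (54 * L / E) := by
          field_simp
          ring
      _ ≤ _ := by linarith [sq_nonneg (M + 1)]

theorem exists_rotorVariation_mul_iterate_height_sq_le (k : ℕ) {b c : ℤ × ℤ} (hbc : b ≠ c) :
    ∃ C : ℝ, ∀ v : ℤ × ℤ, 0 ≤ (quarterTurn^[k] v).2 →
      rotorVariation (fun _ => 4) succZ2 (hitProb pZ2 b c) v *
        ((quarterTurn^[k] v).2 : ℝ) ^ 2 ≤ C := by
  induction k generalizing b c with
  | zero => exact exists_rotorVariation_mul_height_sq_le hbc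
  | succ k ih =>
    obtain ⟨C, hC⟩ := ih (quarterTurn.injective.ne hbc)
    refine ⟨C, fun v hv => ?_⟩
    simpa only [rotorVariation_hitProb_quarterTurn, Function.iterate_succ_apply] using
      hC (quarterTurn v) hv

theorem exists_ringIndex_le_iterate_height (v : ℤ × ℤ) :
    ∃ k ∈ Finset.range 4, 0 ≤ (quarterTurn^[k] v).2 ∧
      ringIndex v ≤ (quarterTurn^[k] v).2 + 1 := by
  by_contra! h
  have h0 := h 0 (by simp)
  have h1 := h 1 (by simp)
  have h2 := h 2 (by simp)
  have h3 := h 3 (by simp)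
  simp only [Function.iterate_succ_apply, Function.iterate_zero_apply, quarterTurn,
    Equiv.coe_fn_mk, ringIndex] at h0 h1 h2 h3
  omega

theorem one_le_ringIndex (v : ℤ × ℤ) : 1 ≤ ringIndex v := by
  unfold ringIndex
  omega

theorem exists_rotorVariation_le_div_ringIndex_sq {b c : ℤ × ℤ} (hbc : b ≠ c) :
    ∃ C : ℝ, ∀ v : ℤ × ℤ, rotorVariation (fun _ => 4) succZ2 (hitProb pZ2 b c) v ≤
      C * (1 / (ringIndex v : ℝ) ^ 2) := by
  choose C hC using fun k => exists_rotorVariation_mul_iterate_height_sq_le k hbc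
  obtain ⟨D, hD⟩ := ((Finset.range 4).image C).exists_le
  refine ⟨2 * D + 8, fun v => ?_⟩
  obtain ⟨k, hk, hheight, hring⟩ := exists_ringIndex_le_iterate_height v
  set y := (quarterTurn^[k] v).2
  have hρ : (1 : ℝ) ≤ ringIndex v := by exact_mod_cast one_le_ringIndex v
  have hring : (ringIndex v : ℝ) ≤ y + 1 := by exact_mod_cast hring
  have hsq : (ringIndex v : ℝ) ^ 2 ≤ 2 * (y : ℝ) ^ 2 + 2 := by nlinarith [sq_nonneg ((y : ℝ) - 1)]
  have hvar := rotorVariation_hitProb_le_four b c v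
  rw [mul_one_div, le_div_iff₀ (by positivity)]
  set ν := rotorVariation (fun _ => 4) succZ2 (hitProb pZ2 b c) v
  calc ν * (ringIndex v : ℝ) ^ 2 ≤ ν * (2 * (y : ℝ) ^ 2 + 2) :=
        mul_le_mul_of_nonneg_left hsq (rotorVariation_nonneg _ _ _ _)
    _ = 2 * (ν * (y : ℝ) ^ 2) + 2 * ν := by ring
    _ ≤ 2 * D + 8 := by
        linarith [(hC k v hheight).trans (hD _ (Finset.mem_image_of_mem C hk))]

end Variation

section SpiralWalk

theorem exists_sum_ringBox_rotorVariation_le {b c : ℤ × ℤ} (hbc : b ≠ c) :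
    ∃ G : ℝ, 0 ≤ G ∧ ∀ R : ℕ, ∑ v ∈ ringBox R,
      rotorVariation (fun _ => 4) succZ2 (hitProb pZ2 b c) v ≤ G * (1 + Real.log R) := by
  obtain ⟨G, hG⟩ := exists_rotorVariation_le_div_ringIndex_sq hbc
  have hG0 : 0 ≤ G := by
    have hρ : (1 : ℝ) ≤ ringIndex b := by exact_mod_cast one_le_ringIndex b
    exact nonneg_of_mul_nonneg_left ((rotorVariation_nonneg _ _ _ b).trans (hG b)) (by positivity)
  refine ⟨G * 8, by positivity, fun R => ?_⟩
  calc ∑ v ∈ ringBox R, rotorVariation (fun _ => 4) succZ2 (hitProb pZ2 b c) v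
      ≤ ∑ v ∈ ringBox R, G * (1 / (ringIndex v : ℝ) ^ 2) := Finset.sum_le_sum fun v _ => hG v
    _ ≤ G * (8 * (1 + Real.log R)) := by
        rw [← Finset.mul_sum]
        grw [sum_ringBox_inv_sq_le, harmonic_le_one_add_log]
    _ = G * 8 * (1 + Real.log R) := by ring

theorem dMod_le_four (b c v : ℤ × ℤ) : dMod b c v ≤ 4 := by
  unfold dMod
  split_ifs <;> omega

theorem ringIndex_succMod_le_max {a : ℤ × ℤ} (b c : ℤ × ℤ) {K : ℤ} (ha : ringIndex a ≤ K)
    (v : ℤ × ℤ) (i : ℕ) : ringIndex (succMod a b c v i) ≤ max (ringIndex v) K + 1 := by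
  unfold succMod
  split_ifs
  · omega
  · exact (ringIndex_succZ2_le v i).trans (by omega)

theorem exists_ringIndex_le_and_nvisits_le (a b c : ℤ × ℤ) :
    ∃ C : ℕ, 0 < C ∧ ∀ (x : ℕ → ℤ × ℤ) (r : ℕ → ℤ × ℤ → ℕ),
      IsRotorWalk (dMod b c) (succMod a b c) x r → (∀ v, r 0 v = rotInit b c v) → x 0 = a →
      ∀ t, 1 ≤ nvisits x t b + nvisits x t c →
        (∀ s ≤ t, ringIndex (x s) ≤ (C * (nvisits x t b + nvisits x t c) : ℕ)) ∧
        ∀ v, nvisits x t v ≤ C * (nvisits x t b + nvisits x t c) := by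
  obtain ⟨w, hw, hreach⟩ := exists_sink_reachable_succMod a b c a
  obtain ⟨C, hC⟩ := IsRotorWalk.exists_nvisits_le_of_reachable hreach
  obtain ⟨K, hKa, hKb, hKc⟩ :
      ∃ K : ℕ, ringIndex a ≤ K ∧ ringIndex b ≤ K ∧ ringIndex c ≤ K := by
    refine ⟨(max (ringIndex a) (max (ringIndex b) (ringIndex c))).toNat, ?_⟩
    omega
  refine ⟨K + 8 * C + 1, by omega, fun x r hwalk hr hx t hn => ?_⟩
  set n := nvisits x t b + nvisits x t c
  have hnw : nvisits x t w ≤ n := by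
    obtain rfl | rfl := hw <;> omega
  have hstart : nvisits x t a ≤ C * (2 * n) := by
    grw [hC x r hwalk t, hnw]
    gcongr
    omega
  have hinward : ∀ v, K < ringIndex v → ∀ k : ℕ, 1 ≤ k →
      (k : ℕ∞) ≤ {e ∈ inEdges (dMod b c) (succMod a b c) v | ringIndex e.1 ≤ ringIndex v}.encard →
      ringIndex (succMod a b c v ((r 0 v + k) % dMod b c v)) ≤ ringIndex v :=
    fun v hv k hk hcard => by
      rw [hr]
      exact ringIndex_succMod_le (by grind) (by grind) hk hcard
  have hin := fun v (hv : v ≠ a) => encard_inEdges_succMod_le b c hv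
  refine ⟨fun s hs => ?_, fun v => ?_⟩
  · have hlevel := hwalk.level_le hin hKa (ringIndex_succMod_le_max b c hKa) hinward hx s
    have : nvisits x s a ≤ nvisits x t a := nvisits_mono x a hs
    have : (K + nvisits x s a : ℤ) ≤ ((K + 8 * C + 1) * n : ℕ) := by
      norm_cast
      nlinarith
    omega
  · calc nvisits x t v ≤ 4 * (C * (2 * n)) := by
          grw [hwalk.nvisits_le_mul hin hx t v, dMod_le_four, hstart]
      _ ≤ (K + 8 * C + 1) * n := by nlinarith

variable {a b c : ℤ × ℤ} {x : ℕ → ℤ × ℤ} {t R : ℕ}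

theorem abs_discrepancy_le_sum_ringBox {r : ℕ → ℤ × ℤ → ℕ} (hbc : b ≠ c)
    (hw : IsRotorWalk (dMod b c) (succMod a b c) x r) (hx : x 0 = a)
    (hR : ∀ s < t, ringIndex (x s) ≤ R) :
    |((nvisits x t b : ℝ) + nvisits x t c) * hitProb pZ2 b c a - nvisits x t b| ≤
      1 + ∑ v ∈ ringBox R, rotorVariation (fun _ => 4) succZ2 (hitProb pZ2 b c) v := by
  have hsink : ∀ v ∈ ringBox R \ {b, c}, ¬(v = b ∨ v = c) := fun v hv => by
    simpa using (Finset.mem_sdiff.1 hv).2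
  calc |((nvisits x t b : ℝ) + nvisits x t c) * hitProb pZ2 b c a - nvisits x t b|
      ≤ 1 + ∑ v ∈ ringBox R \ {b, c},
          rotorVariation (dMod b c) (succMod a b c) (hitProb pZ2 b c) v := by
        refine hw.abs_discrepancy_le hx hbc (fun i => if_pos (.inl rfl))
          (fun i => if_pos (.inr rfl)) (realizes_pZ2.hitProb_mem_Icc b c) (hitProb_self pZ2 b c)
          (hitProb_sink pZ2 hbc)
          (fun v hvb hvc => ?_) (by simp) (by simp) fun s hs => ?_
        · simpa [rotorLaplacian, dMod, succMod, hvb, hvc] using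
            realizes_pZ2.rotorLaplacian_hitProb hvb hvc
        · have := mem_ringBox.2 (hR s hs)
          simp only [Finset.mem_sdiff, Finset.mem_insert, Finset.mem_singleton]
          tauto
    _ = 1 + ∑ v ∈ ringBox R \ {b, c},
          rotorVariation (fun _ => 4) succZ2 (hitProb pZ2 b c) v := by
        congr 1
        refine Finset.sum_congr rfl fun v hv => ?_
        simp only [rotorVariation, dMod, succMod, if_neg (hsink v hv)]
    _ ≤ _ := by
        gcongr
        · exact fun v _ _ => rotorVariation_nonneg _ _ _ v
        · exact Finset.sdiff_subset

theorem time_le_of_nvisits_le {N : ℕ} (hR : ∀ s < t, ringIndex (x s) ≤ R)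
    (hN : ∀ v, nvisits x t v ≤ N) : t ≤ (2 * R) ^ 2 * N :=
  calc t = ∑ v ∈ ringBox R, nvisits x t v :=
        (sum_nvisits x fun s hs => mem_ringBox.2 (hR s hs)).symm
    _ ≤ (2 * R) ^ 2 * N := by
        simpa [card_ringBox] using Finset.sum_le_card_nsmul (ringBox R) _ N fun v _ => hN v

theorem one_add_mul_one_add_log_le {G : ℝ} (hG : 0 ≤ G) {C n : ℕ} (hC : 0 < C) (hn : 2 ≤ n) :
    1 + G * (1 + Real.log (C * n : ℕ)) ≤
      ((1 + G * (1 + Real.log C)) / Real.log 2 + G) * Real.log n := by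
  have hlog2 : 0 < Real.log 2 := Real.log_pos one_lt_two
  have hlogn : Real.log 2 ≤ Real.log n := Real.log_le_log two_pos (by exact_mod_cast hn)
  have : 0 ≤ Real.log C := Real.log_natCast_nonneg C
  have hmul : Real.log (C * n : ℕ) = Real.log C + Real.log n := by
    rw [Nat.cast_mul, Real.log_mul (by positivity) (by positivity)]
  calc 1 + G * (1 + Real.log (C * n : ℕ))
      = (1 + G * (1 + Real.log C)) / Real.log 2 * Real.log 2 + G * Real.log n := by
        rw [hmul, div_mul_cancel₀ _ hlog2.ne']
        ring
    _ ≤ (1 + G * (1 + Real.log C)) / Real.log 2 * Real.log n + G * Real.log n := by gcongr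
    _ = _ := by ring

end SpiralWalk

/-- **Hitting probabilities for walk on ℤ²** (Theorem `hit-prob-log`). -/
theorem rotor_hitting_prob_Z2 (a b c : ℤ × ℤ) (hbc : b ≠ c) (hab : a ≠ b) (hac : a ≠ c) :
    ∃ C C' : ℝ, ∀ (x : ℕ → ℤ × ℤ) (r : ℕ → ℤ × ℤ → ℕ),
      IsRotorWalk (dMod b c) (succMod a b c) x r →
      (∀ v, r 0 v = rotInit b c v) →
      x 0 = a →
      ∀ t : ℕ, 2 ≤ nvisits x t b + nvisits x t c →
        (|hitProb pZ2 b c a -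
            (nvisits x t b : ℝ) / ((nvisits x t b : ℝ) + nvisits x t c)| ≤
          C * Real.log ((nvisits x t b : ℝ) + nvisits x t c) /
            ((nvisits x t b : ℝ) + nvisits x t c)) ∧
        (t : ℝ) ≤ C' * ((nvisits x t b : ℝ) + nvisits x t c) ^ 3 := by
  obtain ⟨G, hG0, hG⟩ := exists_sum_ringBox_rotorVariation_le hbc
  obtain ⟨C, hC0, hC⟩ := exists_ringIndex_le_and_nvisits_le a b c
  refine ⟨(1 + G * (1 + Real.log C)) / Real.log 2 + G, 4 * C ^ 3, fun x r hw hr hx t hn => ?_⟩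
  obtain ⟨hring, hvisits⟩ := hC x r hw hr hx t (by omega)
  have hring := fun s (hs : s < t) => hring s hs.le
  have hdisc := abs_discrepancy_le_sum_ringBox hbc hw hx hring
  have htime := time_le_of_nvisits_le hring hvisits
  rw [← Nat.cast_add] at *
  set n := nvisits x t b + nvisits x t c
  have hn0 : (0 : ℝ) < n := by positivity
  constructor
  · rw [sub_div' hn0.ne', abs_div, abs_of_pos hn0, mul_comm (hitProb _ _ _ _)]
    gcongr
    linarith [hG (C * n), one_add_mul_one_add_log_le hG0 hC0 hn]
  · calc (t : ℝ) ≤ (2 * (C * n)) ^ 2 * (C * n) := by exact_mod_cast htime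
      _ = 4 * C ^ 3 * (n : ℝ) ^ 3 := by ring
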